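/- arXiv:2303.02628 — 2 statements merged into one kernel-verified Lean document; each statement's English description precedes it below -/
import Mathlib

section
/- Fix p ≥ 1. For each n ∈ ℕ let B_n be an n×p random matrix whose entries are centered and jointly Gaussian; equivalently B_n(i,j) = ⟨v^{(n)}_{i,j}, N^{(n)}⟩ for deterministic vectors v^{(n)}_{i,j} ∈ ℝ^{K_n} and a standard Gaussian vector N^{(n)} ~ γ_{K_n}. Set A_n := B_nᵀ B_n. Assume that A_n converges in probability (entrywise) to a deterministic invertible p×p matrix Σ. Then for every q ≥ 1 there exist N ∈ ℕ and C > 0 such that E[ (det A_n)^{−q} ] ≤ C for all n ≥ N. In particular, A_n^{−1} → Σ^{−1} in L^q for every q ≥ 1. -/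
open MeasureTheory ProbabilityTheory MvPolynomial Filter Topology
open scoped ENNReal NNReal

noncomputable def gaussPi (ι : Type) [Fintype ι] : Measure (ι → ℝ) :=
  Measure.pi fun _ => gaussianReal 0 1

noncomputable def hermiteProd {K : ℕ} (k : Fin K → ℕ) : MvPolynomial (Fin K) ℝ :=
  ∏ i, Polynomial.aeval (MvPolynomial.X i) (Polynomial.hermite (k i))

noncomputable def chaos (K m : ℕ) : Submodule ℝ (MvPolynomial (Fin K) ℝ) :=
  Submodule.span ℝ {P | ∃ k : Fin K → ℕ, ∑ i, k i = m ∧ P = hermiteProd k}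

noncomputable def sqField {ι : Type} [Fintype ι] (P : MvPolynomial ι ℝ) (x : ι → ℝ) : ℝ :=
  ∑ i, (eval x (pderiv i P)) ^ 2

def TendstoInLaw {E : Type} [MeasurableSpace E] [TopologicalSpace E]
    (μs : ℕ → Measure E) (μ : Measure E) : Prop :=
  ∀ f : BoundedContinuousFunction E ℝ,
    Tendsto (fun n => ∫ x, f x ∂μs n) atTop (𝓝 (∫ x, f x ∂μ))

namespace WishartAux

lemma lintegral_fin_prod {m : ℕ} (ρ : Measure ℝ) [SigmaFinite ρ]
    (f : Fin m → ℝ → ℝ≥0∞) (hf : ∀ i, Measurable (f i)) :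
    ∫⁻ x : Fin m → ℝ, ∏ i, f i (x i) ∂(Measure.pi fun _ => ρ) = ∏ i, ∫⁻ y, f i y ∂ρ := by
  induction m with
  | zero => simp
  | succ m ih =>
    rw [← ((measurePreserving_piFinSuccAbove (fun _ : Fin (m+1) => ρ) 0).symm).lintegral_comp_emb
      (MeasurableEquiv.measurableEmbedding _)]
    simp_rw [MeasurableEquiv.piFinSuccAbove_symm_apply, Fin.insertNthEquiv,
            Fin.prod_univ_succ, Fin.insertNth_zero, Equiv.coe_fn_mk, Fin.cons_succ, Fin.cons_zero]
    rw [← ih (fun i => f i.succ) (fun i => hf _)]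
    exact lintegral_prod_mul (hf 0).aemeasurable
      (Finset.measurable_prod _ fun i _ => (hf _).comp (measurable_pi_apply i)).aemeasurable

/-- coordinates in the eigenbasis -/
noncomputable def rot {m : ℕ} {S : Matrix (Fin m) (Fin m) ℝ} (hS : S.IsHermitian)
    (x : Fin m → ℝ) : Fin m → ℝ :=
  WithLp.ofLp (hS.eigenvectorBasis.repr (WithLp.toLp 2 x))

lemma rot_sq {m : ℕ} {S : Matrix (Fin m) (Fin m) ℝ} (hS : S.IsHermitian) (x : Fin m → ℝ) :
    ∑ i, rot hS x i ^ 2 = ∑ i, x i ^ 2 := by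
  have h := hS.eigenvectorBasis.repr.norm_map (WithLp.toLp 2 x)
  have h2 : ‖hS.eigenvectorBasis.repr (WithLp.toLp 2 x)‖ ^ 2 = ‖WithLp.toLp 2 x‖ ^ 2 := by rw [h]
  rw [EuclideanSpace.real_norm_sq_eq, EuclideanSpace.real_norm_sq_eq] at h2
  exact h2

lemma quad_eq {m : ℕ} {S : Matrix (Fin m) (Fin m) ℝ} (hS : S.IsHermitian) (x : Fin m → ℝ) :
    x ⬝ᵥ S.mulVec x = ∑ i, hS.eigenvalues i * rot hS x i ^ 2 := by
  have h1 : x ⬝ᵥ S.mulVec x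
      = inner ℝ (WithLp.toLp 2 (S.mulVec x)) (WithLp.toLp 2 x) := by
    simp [EuclideanSpace.inner_eq_star_dotProduct]
  rw [h1, ← hS.eigenvectorBasis.sum_inner_mul_inner]
  refine Finset.sum_congr rfl fun i _ => ?_
  have h2 : inner ℝ (hS.eigenvectorBasis i) (WithLp.toLp 2 x) = rot hS x i := by
    simp [rot, OrthonormalBasis.repr_apply_apply]
  have h3 : inner ℝ (WithLp.toLp 2 (S.mulVec x)) (hS.eigenvectorBasis i)
      = hS.eigenvalues i * rot hS x i := by
    rw [← h2, EuclideanSpace.inner_eq_star_dotProduct, EuclideanSpace.inner_eq_star_dotProduct]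
    simp only [star_trivial]
    have hT : S.IsSymm := by simpa using hS
    rw [Matrix.dotProduct_mulVec, ← Matrix.mulVec_transpose, hT.eq, hS.mulVec_eigenvectorBasis,
      smul_dotProduct, smul_eq_mul, dotProduct_comm]
  rw [h2, h3]; ring

lemma rot_gauss {m : ℕ} {S : Matrix (Fin m) (Fin m) ℝ} (hS : S.IsHermitian) :
    MeasurePreserving (rot hS) (gaussPi (Fin m)) (gaussPi (Fin m)) := by
  have h1 : MeasurePreserving (WithLp.toLp 2 : (Fin m → ℝ) → EuclideanSpace ℝ (Fin m))
      (gaussPi (Fin m)) (stdGaussian (EuclideanSpace ℝ (Fin m))) :=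
    ⟨by fun_prop, map_pi_eq_stdGaussian⟩
  have h2 : MeasurePreserving hS.eigenvectorBasis.repr (stdGaussian (EuclideanSpace ℝ (Fin m)))
      (stdGaussian (EuclideanSpace ℝ (Fin m))) :=
    ⟨by fun_prop, stdGaussian_map _⟩
  have h3 : MeasurePreserving (WithLp.ofLp : EuclideanSpace ℝ (Fin m) → (Fin m → ℝ))
      (stdGaussian (EuclideanSpace ℝ (Fin m))) (gaussPi (Fin m)) := by
    refine ⟨by fun_prop, ?_⟩
    rw [← map_pi_eq_stdGaussian, Measure.map_map (by fun_prop) (by fun_prop)]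
    exact Measure.map_id
  exact h3.comp (h2.comp h1)

lemma rot_leb {m : ℕ} {S : Matrix (Fin m) (Fin m) ℝ} (hS : S.IsHermitian) :
    MeasurePreserving (rot hS) volume volume := by
  have h1 := PiLp.volume_preserving_toLp (Fin m)
  have h2 : MeasurePreserving hS.eigenvectorBasis.repr volume volume :=
    LinearIsometryEquiv.measurePreserving _
  have h3 := PiLp.volume_preserving_ofLp (Fin m)
  exact h3.comp (h2.comp h1)

lemma lintegral_quad {m : ℕ} {S : Matrix (Fin m) (Fin m) ℝ} (hS : S.IsHermitian)
    (ρ : Measure ℝ) [SigmaFinite ρ]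
    (h : MeasurePreserving (rot hS) (Measure.pi fun _ => ρ) (Measure.pi fun _ => ρ)) (t : ℝ) :
    ∫⁻ x : Fin m → ℝ, ENNReal.ofReal (Real.exp (-(t * (x ⬝ᵥ S.mulVec x)))) ∂(Measure.pi fun _ => ρ)
      = ∏ i, ∫⁻ y, ENNReal.ofReal (Real.exp (-(t * hS.eigenvalues i) * y ^ 2)) ∂ρ := by
  rw [← lintegral_fin_prod ρ _ (fun i => by fun_prop)]
  rw [← h.lintegral_comp (f := fun x => ∏ i, ENNReal.ofReal
    (Real.exp (-(t * hS.eigenvalues i) * x i ^ 2))) (by fun_prop)]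
  refine lintegral_congr fun x => ?_
  rw [← ENNReal.ofReal_prod_of_nonneg (fun i _ => (Real.exp_pos _).le), ← Real.exp_sum, quad_eq hS,
    Finset.mul_sum, ← Finset.sum_neg_distrib]
  congr 2
  exact Finset.sum_congr rfl fun i _ => by ring

lemma leb_one {l : ℝ} (hl : 0 ≤ l) :
    ∫⁻ y : ℝ, ENNReal.ofReal (Real.exp (-l * y ^ 2)) = (ENNReal.ofReal √(l / Real.pi))⁻¹ := by
  rcases hl.eq_or_lt with rfl | hl
  · simp
  · rw [← ofReal_integral_eq_lintegral_ofReal (integrable_exp_neg_mul_sq hl)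
      (ae_of_all _ fun _ => (Real.exp_pos _).le), integral_gaussian,
      ← ENNReal.ofReal_inv_of_pos (by positivity), ← Real.sqrt_inv, inv_div]

lemma gauss_one {l : ℝ} (hl : 0 < 1 + 2 * l) :
    ∫⁻ y : ℝ, ENNReal.ofReal (Real.exp (-l * y ^ 2)) ∂(gaussianReal 0 1)
      = ENNReal.ofReal (√(1 + 2 * l))⁻¹ := by
  rw [gaussianReal_of_var_ne_zero _ one_ne_zero,
    lintegral_withDensity_eq_lintegral_mul _ (measurable_gaussianPDF _ _) (by fun_prop)]
  have h : ∀ y : ℝ, (gaussianPDF 0 1 * fun y : ℝ => ENNReal.ofReal (Real.exp (-l * y ^ 2))) y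
      = ENNReal.ofReal (√(2 * Real.pi))⁻¹ *
        ENNReal.ofReal (Real.exp (-((1 + 2 * l) / 2) * y ^ 2)) := by
    intro y
    simp only [Pi.mul_apply, gaussianPDF, gaussianPDFReal, NNReal.coe_one, mul_one, sub_zero]
    rw [← ENNReal.ofReal_mul (by positivity), ← ENNReal.ofReal_mul (by positivity), mul_assoc,
      ← Real.exp_add]
    congr 3; ring_nf
  simp_rw [h]
  rw [lintegral_const_mul _ (by fun_prop), leb_one (by positivity),
    ← ENNReal.ofReal_inv_of_pos (by positivity), ← ENNReal.ofReal_mul (by positivity)]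
  congr 1
  rw [← mul_inv, ← Real.sqrt_mul (by positivity)]
  congr 2
  field_simp

lemma gauss_quad {m : ℕ} {S : Matrix (Fin m) (Fin m) ℝ} (hS : S.IsHermitian) (t : ℝ)
    (ht : ∀ i, 0 < 1 + 2 * (t * hS.eigenvalues i)) :
    ∫⁻ x : Fin m → ℝ, ENNReal.ofReal (Real.exp (-(t * (x ⬝ᵥ S.mulVec x)))) ∂(gaussPi (Fin m))
      = ENNReal.ofReal (√(∏ i, (1 + 2 * (t * hS.eigenvalues i))))⁻¹ := by
  have := lintegral_quad hS (gaussianReal 0 1) (rot_gauss hS) t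
  rw [gaussPi, this, Finset.prod_congr rfl fun i _ => gauss_one (ht i),
    ← ENNReal.ofReal_prod_of_nonneg (fun i _ => by positivity), Finset.prod_inv_distrib,
    Real.sqrt_prod _ fun i _ => (ht i).le]

lemma leb_quad {m : ℕ} {S : Matrix (Fin m) (Fin m) ℝ} (hS : S.PosSemidef) :
    ∫⁻ x : Fin m → ℝ, ENNReal.ofReal (Real.exp (-(x ⬝ᵥ S.mulVec x)))
      = (ENNReal.ofReal √(S.det / Real.pi ^ m))⁻¹ := by
  have := lintegral_quad hS.1 volume (rot_leb hS.1) 1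
  simp only [one_mul] at this
  rw [volume_pi, this, Finset.prod_congr rfl fun i _ => leb_one (hS.eigenvalues_nonneg i),
    ← ENNReal.prod_inv_distrib, ← ENNReal.ofReal_prod_of_nonneg (fun i _ => by positivity),
    ← Real.sqrt_prod _ fun i _ => div_nonneg (hS.eigenvalues_nonneg i) Real.pi_pos.le,
    Finset.prod_div_distrib, hS.1.det_eq_prod_eigenvalues]
  · simp
  · intro i _ j _ _
    simp

lemma prod_growth {m : ℕ} (l : Fin m → ℝ) (hl : ∀ i, 0 ≤ l i) (M : ℕ) {T t : ℝ} (hT : 1 ≤ T)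
    (ht : T ≤ t) :
    (t / T) ^ M * ((∏ i, (1 + 2 * (T * l i))) - T ^ M * ∏ i, (1 + 2 * (1 * l i)))
      ≤ ∏ i, (1 + 2 * (t * l i)) := by
  have hT0 : 0 < T := by linarith
  have ht0 : 0 < t := by linarith
  have key : ∀ r : ℝ, ∏ i, (1 + 2 * (r * l i))
      = ∑ s ∈ (Finset.univ : Finset (Fin m)).powerset, r ^ s.card * ∏ i ∈ s, (2 * l i) := by
    intro r
    rw [Finset.prod_one_add]
    refine Finset.sum_congr rfl fun s _ => ?_
    rw [← Finset.prod_const, ← Finset.prod_mul_distrib]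
    exact Finset.prod_congr rfl fun i _ => by ring
  rw [key, key, key, Finset.mul_sum, ← Finset.sum_sub_distrib, Finset.mul_sum]
  refine Finset.sum_le_sum fun s _ => ?_
  have hw : 0 ≤ ∏ i ∈ s, (2 * l i) := Finset.prod_nonneg fun i _ => by linarith [hl i]
  set w := ∏ i ∈ s, (2 * l i)
  have hq : 1 ≤ t / T := by rw [one_le_div hT0]; exact ht
  rw [one_pow, one_mul, ← sub_mul, ← mul_assoc]
  refine mul_le_mul_of_nonneg_right ?_ hw
  rcases le_total M s.card with h | h
  · calc (t / T) ^ M * (T ^ s.card - T ^ M) ≤ (t / T) ^ s.card * T ^ s.card := by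
          refine mul_le_mul (pow_le_pow_right₀ hq h) (by linarith [pow_pos hT0 M]) ?_ (by positivity)
          linarith [pow_le_pow_right₀ hT h]
      _ = t ^ s.card := by rw [div_pow, div_mul_cancel₀ _ (by positivity)]
  · have h1 : T ^ s.card - T ^ M ≤ 0 := by linarith [pow_le_pow_right₀ hT h]
    calc (t / T) ^ M * (T ^ s.card - T ^ M) ≤ 0 :=
          mul_nonpos_of_nonneg_of_nonpos (by positivity) h1
      _ ≤ _ := by positivity

section single
variable {n p K : ℕ} (v : Fin n → Fin p → Fin K → ℝ)

def Bm (x : Fin K → ℝ) : Matrix (Fin n) (Fin p) ℝ := Matrix.of fun i a => ∑ k, v i a k * x k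
def Am (x : Fin K → ℝ) : Matrix (Fin p) (Fin p) ℝ := (Bm v x).transpose * Bm v x
def Wm (u : Fin p → ℝ) : Matrix (Fin n) (Fin K) ℝ := Matrix.of fun i k => ∑ a, v i a k * u a
def Sm (u : Fin p → ℝ) : Matrix (Fin K) (Fin K) ℝ := (Wm v u).transpose * Wm v u

lemma Am_apply (x : Fin K → ℝ) (a b : Fin p) :
    Am v x a b = ∑ i, (∑ k, v i a k * x k) * (∑ k, v i b k * x k) := by
  simp [Am, Bm, Matrix.mul_apply]

lemma Am_psd (x : Fin K → ℝ) : (Am v x).PosSemidef := by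
  simpa [Am] using Matrix.posSemidef_conjTranspose_mul_self (Bm v x)

lemma Sm_psd (u : Fin p → ℝ) : (Sm v u).PosSemidef := by
  simpa [Sm] using Matrix.posSemidef_conjTranspose_mul_self (Wm v u)

lemma Am_quad (x : Fin K → ℝ) (u : Fin p → ℝ) :
    u ⬝ᵥ (Am v x).mulVec u = x ⬝ᵥ (Sm v u).mulVec x := by
  have h : (Bm v x).mulVec u = (Wm v u).mulVec x := by
    ext i
    simp only [Matrix.mulVec, dotProduct, Bm, Wm, Matrix.of_apply, Finset.sum_mul]
    rw [Finset.sum_comm]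
    exact Finset.sum_congr rfl fun k _ => Finset.sum_congr rfl fun a _ => by ring
  rw [Am, Sm, ← Matrix.mulVec_mulVec, ← Matrix.mulVec_mulVec, Matrix.dotProduct_mulVec,
    Matrix.vecMul_transpose, Matrix.dotProduct_mulVec x, Matrix.vecMul_transpose, h]

lemma Am_quad_nonneg (x : Fin K → ℝ) (u : Fin p → ℝ) : 0 ≤ u ⬝ᵥ (Am v x).mulVec u := by
  simpa using (Am_psd v x).dotProduct_mulVec_nonneg u

noncomputable def lam (u : Fin p → ℝ) : Fin K → ℝ := (Sm_psd v u).1.eigenvalues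
lemma lam_nonneg (u : Fin p → ℝ) (i : Fin K) : 0 ≤ lam v u i := (Sm_psd v u).eigenvalues_nonneg i

noncomputable def ff (u : Fin p → ℝ) (t : ℝ) : ℝ := ∏ i, (1 + 2 * (t * lam v u i))

lemma laplace (u : Fin p → ℝ) (t : ℝ) (ht : ∀ i, 0 < 1 + 2 * (t * lam v u i)) :
    ∫⁻ x, ENNReal.ofReal (Real.exp (-(t * (u ⬝ᵥ (Am v x).mulVec u)))) ∂(gaussPi (Fin K))
      = ENNReal.ofReal (√(ff v u t))⁻¹ := by
  simp_rw [Am_quad]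
  exact gauss_quad (Sm_psd v u).1 t ht

lemma ff_fac_pos (u : Fin p → ℝ) {t : ℝ} (ht : 0 ≤ t) (i : Fin K) :
    0 < 1 + 2 * (t * lam v u i) := by
  have := mul_nonneg ht (lam_nonneg v u i); linarith

lemma ff_pos (u : Fin p → ℝ) {t : ℝ} (ht : 0 ≤ t) : 0 < ff v u t :=
  Finset.prod_pos fun i _ => ff_fac_pos v u ht i

lemma quad_diff (M : Matrix (Fin p) (Fin p) ℝ) {ε : ℝ} (hM : ∀ a b, |M a b| ≤ ε)
    (u : Fin p → ℝ) : |u ⬝ᵥ M.mulVec u| ≤ ε * p * ∑ a, u a ^ 2 := by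
  have h1 : u ⬝ᵥ M.mulVec u = ∑ a, ∑ b, u a * (M a b * u b) := by
    simp only [dotProduct, Matrix.mulVec, Finset.mul_sum]
  rw [h1]
  calc |∑ a, ∑ b, u a * (M a b * u b)| ≤ ∑ a, ∑ b, |u a * (M a b * u b)| :=
        (Finset.abs_sum_le_sum_abs _ _).trans
          (Finset.sum_le_sum fun a _ => Finset.abs_sum_le_sum_abs _ _)
    _ ≤ ∑ a : Fin p, ∑ b : Fin p, ε / 2 * (u a ^ 2 + u b ^ 2) := by
        refine Finset.sum_le_sum fun a _ => Finset.sum_le_sum fun b _ => ?_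
        rw [abs_mul, abs_mul]
        have hε : 0 ≤ ε := (abs_nonneg _).trans (hM a b)
        have h2 := hM a b
        have h3 : |u a| * (|M a b| * |u b|) ≤ |u a| * (ε * |u b|) := by gcongr
        have h4 := sq_abs (u a)
        have h5 := sq_abs (u b)
        nlinarith [mul_nonneg hε (sq_nonneg (|u a| - |u b|))]
    _ = ε * p * ∑ a, u a ^ 2 := by
        simp only [← Finset.mul_sum, Finset.sum_add_distrib, Finset.sum_const, Finset.card_univ,
          Fintype.card_fin, nsmul_eq_mul]
        ring

/-- bad event -/
def bad (Sig : Matrix (Fin p) (Fin p) ℝ) (ε : ℝ) : Set (Fin K → ℝ) :=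
  {x | ∃ a b, ε ≤ |Am v x a b - Sig a b|}

@[fun_prop]
lemma Am_cont (a b : Fin p) : Continuous fun x => Am v x a b := by
  simp_rw [Am_apply]; fun_prop

lemma bad_meas (Sig : Matrix (Fin p) (Fin p) ℝ) (ε : ℝ) : MeasurableSet (bad v Sig ε) := by
  have : bad v Sig ε = ⋃ a, ⋃ b, {x | ε ≤ |Am v x a b - Sig a b|} := by ext; simp [bad]
  rw [this]
  refine MeasurableSet.iUnion fun a => MeasurableSet.iUnion fun b => ?_
  exact (isClosed_le continuous_const (by fun_prop)).measurableSet

instance (m : ℕ) : IsProbabilityMeasure (gaussPi (Fin m)) := by unfold gaussPi; infer_instance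

lemma good_quad {Sig : Matrix (Fin p) (Fin p) ℝ} {ε : ℝ} {x : Fin K → ℝ} (hx : x ∉ bad v Sig ε)
    {u : Fin p → ℝ} (hu : ∑ a, u a ^ 2 = 1) :
    |u ⬝ᵥ (Am v x).mulVec u - u ⬝ᵥ Sig.mulVec u| ≤ ε * p := by
  simp only [bad, Set.mem_ofPred_eq, not_exists, not_le] at hx
  have := quad_diff (Am v x - Sig) (ε := ε) (fun a b => (hx a b).le) u
  rwa [Matrix.sub_mulVec, dotProduct_sub, hu, mul_one] at this

lemma ff_one_le {Sig : Matrix (Fin p) (Fin p) ℝ} {C : ℝ}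
    (hbad : gaussPi (Fin K) (bad v Sig 1) ≤ 1 / 2)
    {u : Fin p → ℝ} (hu : ∑ a, u a ^ 2 = 1) (hC : u ⬝ᵥ Sig.mulVec u ≤ C) :
    ff v u 1 ≤ 4 * Real.exp (2 * (C + p)) := by
  have h1 := laplace v u 1 (ff_fac_pos v u zero_le_one)
  have hgood : 1 / 2 ≤ gaussPi (Fin K) (bad v Sig 1)ᶜ := by
    rw [prob_compl_eq_one_sub (bad_meas _ _ _)]
    calc (1 / 2 : ℝ≥0∞) = 1 - 1 / 2 := by simp
      _ ≤ _ := tsub_le_tsub_left hbad 1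
  have h2 : ENNReal.ofReal (Real.exp (-(C + p))) * (1 / 2) ≤ ENNReal.ofReal (√(ff v u 1))⁻¹ := by
    rw [← h1]
    calc _ ≤ ENNReal.ofReal (Real.exp (-(C + p))) * gaussPi (Fin K) (bad v Sig 1)ᶜ := by gcongr
      _ = ∫⁻ x in (bad v Sig 1)ᶜ, ENNReal.ofReal (Real.exp (-(C + p))) ∂(gaussPi (Fin K)) := by
          rw [setLIntegral_const]
      _ ≤ ∫⁻ x in (bad v Sig 1)ᶜ, ENNReal.ofReal
            (Real.exp (-(1 * (u ⬝ᵥ (Am v x).mulVec u)))) ∂(gaussPi (Fin K)) := by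
          refine setLIntegral_mono' (bad_meas _ _ _).compl fun x hx => ?_
          have := (abs_le.1 (good_quad v hx hu)).2
          gcongr
          linarith
      _ ≤ _ := setLIntegral_le_lintegral _ _
  have h3 : Real.exp (-(C + p)) * (1 / 2) ≤ (√(ff v u 1))⁻¹ := by
    have e : (1 / 2 : ℝ≥0∞) = ENNReal.ofReal (1 / 2) := by
      rw [ENNReal.ofReal_div_of_pos (by norm_num)]; simp
    rw [e, ← ENNReal.ofReal_mul (by positivity)] at h2
    exact (ENNReal.ofReal_le_ofReal_iff (by positivity)).1 h2
  have hs : 0 < √(ff v u 1) := Real.sqrt_pos.2 (ff_pos v u zero_le_one)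
  have h4 : √(ff v u 1) ≤ 2 * Real.exp (C + p) := by
    rw [le_inv_comm₀ (by positivity) hs] at h3
    refine h3.trans (le_of_eq ?_)
    rw [Real.exp_neg]; field_simp
  calc ff v u 1 = √(ff v u 1) ^ 2 := (Real.sq_sqrt (ff_pos v u zero_le_one).le).symm
    _ ≤ (2 * Real.exp (C + p)) ^ 2 := by gcongr
    _ = _ := by rw [mul_pow, ← Real.exp_nat_mul]; norm_num

lemma ff_T_ge {Sig : Matrix (Fin p) (Fin p) ℝ} {c ε T δ E : ℝ} (hT : 0 ≤ T) (hδ : 0 ≤ δ)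
    (hbad : gaussPi (Fin K) (bad v Sig ε) ≤ ENNReal.ofReal δ) (hε : ε * p ≤ c / 2)
    {u : Fin p → ℝ} (hu : ∑ a, u a ^ 2 = 1) (hc : c ≤ u ⬝ᵥ Sig.mulVec u) (hE : 0 < E)
    (h : Real.exp (-(T * (c / 2))) + δ ≤ (√E)⁻¹) :
    E ≤ ff v u T := by
  have h1 := laplace v u T (ff_fac_pos v u hT)
  have h2 : ENNReal.ofReal (√(ff v u T))⁻¹ ≤ ENNReal.ofReal (√E)⁻¹ := by
    rw [← h1]
    calc _ ≤ ∫⁻ x, (ENNReal.ofReal (Real.exp (-(T * (c / 2))))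
              + (bad v Sig ε).indicator 1 x) ∂(gaussPi (Fin K)) := by
          refine lintegral_mono fun x => ?_
          by_cases hx : x ∈ bad v Sig ε
          · refine le_add_left ?_
            rw [Set.indicator_of_mem hx, Pi.one_apply, ENNReal.ofReal_le_one, Real.exp_le_one_iff]
            have := mul_nonneg hT (Am_quad_nonneg v x u)
            linarith
          · refine le_add_right ?_
            have := (abs_le.1 (good_quad v hx hu)).1
            gcongr
            linarith
      _ = ENNReal.ofReal (Real.exp (-(T * (c / 2)))) + gaussPi (Fin K) (bad v Sig ε) := by
          rw [lintegral_add_left (by fun_prop), lintegral_indicator_one (bad_meas _ _ _)]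
          simp
      _ ≤ ENNReal.ofReal (Real.exp (-(T * (c / 2)))) + ENNReal.ofReal δ := by gcongr
      _ = ENNReal.ofReal (Real.exp (-(T * (c / 2))) + δ) :=
          (ENNReal.ofReal_add (by positivity) hδ).symm
      _ ≤ _ := ENNReal.ofReal_le_ofReal h
  have h3 := (ENNReal.ofReal_le_ofReal_iff (by positivity)).1 h2
  have h4 : √E ≤ √(ff v u T) :=
    (inv_le_inv₀ (Real.sqrt_pos.2 (ff_pos v u hT)) (Real.sqrt_pos.2 hE)).1 h3
  exact (Real.sqrt_le_sqrt_iff (ff_pos v u hT).le).1 h4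

lemma decay_unit {T D : ℝ} (hT : 1 ≤ T) (m : ℕ) {u : Fin p → ℝ}
    (h1 : ff v u 1 ≤ D) (h2 : T ^ (2 * m) * D + 1 ≤ ff v u T) {t : ℝ} (ht : T ≤ t) :
    ∫⁻ x, ENNReal.ofReal (Real.exp (-(t * (u ⬝ᵥ (Am v x).mulVec u)))) ∂(gaussPi (Fin K))
      ≤ ENNReal.ofReal ((T / t) ^ m) := by
  have ht0 : 0 < t := by linarith
  have hT0 : 0 < T := by linarith
  rw [laplace v u t (ff_fac_pos v u ht0.le)]
  refine ENNReal.ofReal_le_ofReal ?_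
  have h3 : (t / T) ^ (2 * m) ≤ ff v u t := by
    refine le_trans ?_ (prod_growth (lam v u) (lam_nonneg v u) (2 * m) hT ht)
    refine le_mul_of_one_le_right (by positivity) ?_
    change 1 ≤ ff v u T - T ^ (2 * m) * ff v u 1
    have : T ^ (2 * m) * ff v u 1 ≤ T ^ (2 * m) * D := by gcongr
    linarith
  have h4 : (t / T) ^ m ≤ √(ff v u t) := by
    refine Real.le_sqrt_of_sq_le ?_
    rwa [← pow_mul, mul_comm m 2]
  calc (√(ff v u t))⁻¹ ≤ ((t / T) ^ m)⁻¹ := by gcongr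
    _ = _ := by rw [← inv_pow, inv_div]

lemma decay {T D : ℝ} (hT : 1 ≤ T) (m : ℕ)
    (h1 : ∀ u : Fin p → ℝ, ∑ a, u a ^ 2 = 1 → ff v u 1 ≤ D)
    (h2 : ∀ u : Fin p → ℝ, ∑ a, u a ^ 2 = 1 → T ^ (2 * m) * D + 1 ≤ ff v u T) (w : Fin p → ℝ) :
    ∫⁻ x, ENNReal.ofReal (Real.exp (-(w ⬝ᵥ (Am v x).mulVec w))) ∂(gaussPi (Fin K))
      ≤ ENNReal.ofReal (((1 + T) / (1 + ∑ a, w a ^ 2)) ^ m) := by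
  set r := ∑ a, w a ^ 2 with hr
  have hr0 : 0 ≤ r := Finset.sum_nonneg fun a _ => sq_nonneg _
  rcases le_total T r with h | h
  · have hrp : 0 < r := by linarith
    set u : Fin p → ℝ := (√r)⁻¹ • w with hu
    have hs : (√r) ^ 2 = r := Real.sq_sqrt hr0
    have hsp : 0 < √r := Real.sqrt_pos.2 hrp
    have hu1 : ∑ a, u a ^ 2 = 1 := by
      simp only [hu, Pi.smul_apply, smul_eq_mul, mul_pow, ← Finset.mul_sum, ← hr]
      rw [inv_pow, hs, inv_mul_cancel₀ hrp.ne']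
    have key := decay_unit v hT m (h1 u hu1) (h2 u hu1) h
    have e : ∀ x, r * (u ⬝ᵥ (Am v x).mulVec u) = w ⬝ᵥ (Am v x).mulVec w := by
      intro x
      rw [hu, Matrix.mulVec_smul, smul_dotProduct, dotProduct_smul, smul_eq_mul, smul_eq_mul]
      rw [← mul_assoc, ← mul_assoc]
      nth_rewrite 1 [← hs]
      field_simp
    simp_rw [e] at key
    refine key.trans (ENNReal.ofReal_le_ofReal ?_)
    refine pow_le_pow_left₀ (by positivity) ?_ m
    rw [div_le_div_iff₀ hrp (by linarith)]
    nlinarith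
  · calc _ ≤ ∫⁻ x, 1 ∂(gaussPi (Fin K)) := by
          refine lintegral_mono fun x => ?_
          rw [ENNReal.ofReal_le_one, Real.exp_le_one_iff]
          linarith [Am_quad_nonneg v x w]
      _ = ENNReal.ofReal 1 := by simp
      _ ≤ _ := by
          refine ENNReal.ofReal_le_ofReal (one_le_pow₀ ?_)
          rw [one_le_div (by linarith)]; linarith

end single

lemma one_add_sum_le {ι : Type} (s : Finset ι) (l : ι → ℝ) (hl : ∀ i, 0 ≤ l i) :
    1 + ∑ i ∈ s, l i ≤ ∏ i ∈ s, (1 + l i) := by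
  classical
  induction s using Finset.induction_on with
  | empty => simp
  | insert a s ha ih =>
    rw [Finset.sum_insert ha, Finset.prod_insert ha]
    have := Finset.sum_nonneg fun i (_ : i ∈ s) => hl i
    nlinarith [hl a, mul_nonneg (hl a) this]

lemma one_sub_sum_le {ι : Type} (s : Finset ι) (l : ι → ℝ) (hl : ∀ i, 0 ≤ l i)
    (hl1 : ∀ i, l i ≤ 1) : 1 - ∑ i ∈ s, l i ≤ ∏ i ∈ s, (1 - l i) := by
  classical
  induction s using Finset.induction_on with
  | empty => simp
  | insert a s ha ih =>
    rw [Finset.sum_insert ha, Finset.prod_insert ha]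
    have := Finset.sum_nonneg fun i (_ : i ∈ s) => hl i
    nlinarith [hl a, mul_nonneg (hl a) this, hl1 a,
      mul_le_mul_of_nonneg_left ih (sub_nonneg.2 (hl1 a))]

/-- weight -/
noncomputable def hw {p : ℕ} (u : Fin p → ℝ) : ℝ := ∏ a, (1 + u a ^ 2)

lemma hw_one_le {p : ℕ} (u : Fin p → ℝ) : 1 ≤ hw u := by
  calc (1:ℝ) = ∏ a : Fin p, 1 := by simp
    _ ≤ _ := Finset.prod_le_prod (fun _ _ => zero_le_one) fun a _ => by
      linarith [sq_nonneg (u a)]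

lemma hw_le {p : ℕ} (u : Fin p → ℝ) : hw u ≤ (1 + ∑ a, u a ^ 2) ^ p := by
  calc hw u ≤ ∏ a : Fin p, (1 + ∑ a, u a ^ 2) :=
        Finset.prod_le_prod (fun a _ => by positivity) fun a _ => by
          have := Finset.single_le_sum (f := fun a => u a ^ 2) (fun i _ => sq_nonneg _)
            (Finset.mem_univ a)
          simpa using this
    _ = _ := by simp

@[fun_prop]
lemma hw_cont {p : ℕ} : Continuous (hw : (Fin p → ℝ) → ℝ) := by unfold hw; fun_prop

noncomputable def HH (p : ℕ) : ℝ≥0∞ := ∫⁻ u : Fin p → ℝ, ENNReal.ofReal (hw u)⁻¹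

lemma HH_lt (p : ℕ) : HH p < ⊤ := by
  have h : HH p = ∏ a : Fin p, ∫⁻ y : ℝ, ENNReal.ofReal (1 + y ^ 2)⁻¹ := by
    rw [← lintegral_fin_prod volume _ (fun _ => by fun_prop), HH, volume_pi]
    refine lintegral_congr fun u => ?_
    rw [← ENNReal.ofReal_prod_of_nonneg (fun i _ => by positivity), Finset.prod_inv_distrib, hw]
  rw [h]
  refine ENNReal.prod_lt_top fun a _ => ?_
  exact integrable_inv_one_add_sq.lintegral_lt_top

lemma holder_step {p : ℕ} (k : ℕ) (hk : 2 ≤ k) (g : (Fin p → ℝ) → ℝ) (hg : Continuous g)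
    (hg0 : ∀ u, 0 ≤ g u) (hg1 : ∀ u, g u ≤ 1) :
    (∫⁻ u, ENNReal.ofReal (g u)) ^ k ≤
      (∫⁻ u, ENNReal.ofReal (g u) * ENNReal.ofReal (hw u ^ k)) *
        HH p ^ ((k : ℝ) * (1 / (k : ℝ).conjExponent)) := by
  have hk1 : (1 : ℝ) < k := by exact_mod_cast hk
  have hc := Real.HolderConjugate.conjExponent hk1
  have hk0 : (k : ℝ) ≠ 0 := by positivity
  have h1 := ENNReal.lintegral_mul_le_Lp_mul_Lq volume hc
    (f := fun u => ENNReal.ofReal (g u * hw u)) (g := fun u : Fin p → ℝ => ENNReal.ofReal (hw u)⁻¹)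
    (by fun_prop) (by
      have : Measurable (hw : (Fin p → ℝ) → ℝ) := hw_cont.measurable
      fun_prop)
  have e1 : ∀ u : Fin p → ℝ, ((fun u => ENNReal.ofReal (g u * hw u)) *
      (fun u : Fin p → ℝ => ENNReal.ofReal (hw u)⁻¹)) u = ENNReal.ofReal (g u) := by
    intro u
    have := hw_one_le u
    have h0 : 0 < hw u := by linarith
    rw [Pi.mul_apply, ← ENNReal.ofReal_mul (mul_nonneg (hg0 u) h0.le),
      mul_inv_cancel_right₀ h0.ne']
  simp_rw [e1] at h1
  have h2 : (∫⁻ u, ENNReal.ofReal (g u * hw u) ^ (k : ℝ)) ≤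
      ∫⁻ u, ENNReal.ofReal (g u) * ENNReal.ofReal (hw u ^ k) := by
    refine lintegral_mono fun u => ?_
    have := hw_one_le u
    have h0 : 0 < hw u := by linarith
    simp only
    rw [ENNReal.rpow_natCast, ← ENNReal.ofReal_pow (mul_nonneg (hg0 u) h0.le), mul_pow,
      ENNReal.ofReal_mul (pow_nonneg (hg0 u) k)]
    gcongr
    exact pow_le_of_le_one (hg0 u) (hg1 u) (by omega)
  have h3 : (∫⁻ u : Fin p → ℝ, ENNReal.ofReal (hw u)⁻¹ ^ (k : ℝ).conjExponent) ≤ HH p := by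
    refine lintegral_mono fun u => ?_
    have := hw_one_le u
    simp only
    refine (ENNReal.rpow_le_rpow_of_exponent_ge ?_ hc.symm.lt.le).trans (ENNReal.rpow_one _).le
    rw [ENNReal.ofReal_le_one]
    exact inv_le_one_of_one_le₀ this
  calc (∫⁻ u, ENNReal.ofReal (g u)) ^ k
      ≤ ((∫⁻ u, ENNReal.ofReal (g u) * ENNReal.ofReal (hw u ^ k)) ^ (1 / (k:ℝ)) *
        HH p ^ (1 / (k : ℝ).conjExponent)) ^ k := by
        refine pow_le_pow_left' (h1.trans ?_) k
        have := hc.symm.pos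
        gcongr
    _ = _ := by
        rw [mul_pow, ← ENNReal.rpow_natCast, ← ENNReal.rpow_natCast, ← ENNReal.rpow_mul,
          ← ENNReal.rpow_mul, one_div_mul_cancel hk0, ENNReal.rpow_one, mul_comm (k:ℝ)]

/-- the final constant -/
noncomputable def CC (p k : ℕ) (T : ℝ) : ℝ≥0∞ :=
  (ENNReal.ofReal ((1 + T) ^ (p * (k + 1))) * HH p) *
        HH p ^ ((k : ℝ) * (1 / (k : ℝ).conjExponent))

lemma CC_lt (p k : ℕ) (hk : 2 ≤ k) (T : ℝ) : CC p k T < ⊤ := by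
  have hk1 : (1 : ℝ) < k := by exact_mod_cast hk
  have hc := Real.HolderConjugate.conjExponent hk1
  have := hc.symm.pos
  refine ENNReal.mul_lt_top (ENNReal.mul_lt_top ENNReal.ofReal_lt_top (HH_lt p)) ?_
  exact ENNReal.rpow_lt_top_of_nonneg (by positivity) (HH_lt p).ne

section single
variable {n p K : ℕ} (v : Fin n → Fin p → Fin K → ℝ)

lemma quad_cont : Continuous fun z : (Fin K → ℝ) × (Fin p → ℝ) =>
    z.2 ⬝ᵥ (Am v z.1).mulVec z.2 := by
  simp only [dotProduct, Matrix.mulVec, Am_apply]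
  fun_prop

lemma neg_moment {T : ℝ} (hT : 1 ≤ T) (q : ℕ) (hq : 1 ≤ q)
    (h : ∀ w : Fin p → ℝ,
      ∫⁻ x, ENNReal.ofReal (Real.exp (-(w ⬝ᵥ (Am v x).mulVec w))) ∂(gaussPi (Fin K))
      ≤ ENNReal.ofReal (((1 + T) / (1 + ∑ a, w a ^ 2)) ^ (p * (2 * q + 1)))) :
    ∫⁻ x, (ENNReal.ofReal ((Am v x).det) ^ q)⁻¹ ∂gaussPi (Fin K) ≤ CC p (2 * q) T := by
  have hqc := quad_cont v
  have hmeas : Measurable fun z : (Fin K → ℝ) × (Fin p → ℝ) =>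
          ENNReal.ofReal (Real.exp (-(z.2 ⬝ᵥ (Am v z.1).mulVec z.2)))
            * ENNReal.ofReal (hw z.2 ^ (2 * q)) :=
    (ENNReal.measurable_ofReal.comp (Real.continuous_exp.comp hqc.neg).measurable).mul
      (by fun_prop)
  have hpt : ∀ x, (ENNReal.ofReal ((Am v x).det) ^ q)⁻¹ ≤
      (∫⁻ u : Fin p → ℝ, ENNReal.ofReal (Real.exp (-(u ⬝ᵥ (Am v x).mulVec u)))) ^ (2 * q) := by
    intro x
    have hd := (Am_psd v x).det_nonneg
    rw [leb_quad (Am_psd v x), ← ENNReal.inv_pow, ENNReal.inv_le_inv, pow_mul]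
    refine pow_le_pow_left' ?_ q
    rw [← ENNReal.ofReal_pow (Real.sqrt_nonneg _), Real.sq_sqrt (by positivity)]
    refine ENNReal.ofReal_le_ofReal (div_le_self hd (one_le_pow₀ ?_))
    linarith [Real.pi_gt_three]
  calc _ ≤ ∫⁻ x, (∫⁻ u : Fin p → ℝ, ENNReal.ofReal (Real.exp (-(u ⬝ᵥ (Am v x).mulVec u)))
            * ENNReal.ofReal (hw u ^ (2 * q))) *
        HH p ^ (((2 * q : ℕ) : ℝ) * (1 / ((2 * q : ℕ) : ℝ).conjExponent)) ∂(gaussPi (Fin K)) := by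
        refine lintegral_mono fun x => (hpt x).trans ?_
        refine holder_step (2 * q) (by omega)
          (fun u => Real.exp (-(u ⬝ᵥ (Am v x).mulVec u))) ?_ (fun u => (Real.exp_pos _).le) ?_
        · have : Continuous fun u : Fin p → ℝ => u ⬝ᵥ (Am v x).mulVec u :=
            hqc.comp (Continuous.prodMk_right x)
          fun_prop
        · intro u
          rw [Real.exp_le_one_iff]
          linarith [Am_quad_nonneg v x u]
    _ = (∫⁻ x, (∫⁻ u : Fin p → ℝ, ENNReal.ofReal (Real.exp (-(u ⬝ᵥ (Am v x).mulVec u)))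
            * ENNReal.ofReal (hw u ^ (2 * q))) ∂(gaussPi (Fin K))) *
        HH p ^ (((2 * q : ℕ) : ℝ) * (1 / ((2 * q : ℕ) : ℝ).conjExponent)) := by
        refine lintegral_mul_const _ ?_
        exact hmeas.lintegral_prod_right'
    _ ≤ _ := by
        rw [CC]
        gcongr
        rw [lintegral_lintegral_swap]
        · rw [HH, ← lintegral_const_mul _ (by
            have : Measurable (hw : (Fin p → ℝ) → ℝ) := hw_cont.measurable
            fun_prop)]
          refine lintegral_mono fun u => ?_
          simp only
          rw [lintegral_mul_const _ (by
            have : Continuous fun x : Fin K → ℝ => u ⬝ᵥ (Am v x).mulVec u :=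
              hqc.comp (Continuous.prodMk_left u)
            exact ENNReal.measurable_ofReal.comp (Real.continuous_exp.comp this.neg).measurable)]
          refine (mul_le_mul_left (h u) _).trans ?_
          have h1 := hw_one_le u
          have h0 : 0 < hw u := by linarith
          have hr : 0 < 1 + ∑ a, u a ^ 2 := by
            have : 0 ≤ ∑ a, u a ^ 2 := Finset.sum_nonneg fun a _ => sq_nonneg _
            linarith
          rw [← ENNReal.ofReal_mul (by positivity), ← ENNReal.ofReal_mul (by positivity)]
          refine ENNReal.ofReal_le_ofReal ?_
          have h2 : hw u ^ (2 * q + 1) ≤ (1 + ∑ a, u a ^ 2) ^ (p * (2 * q + 1)) := by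
            rw [pow_mul]; exact pow_le_pow_left₀ h0.le (hw_le u) _
          rw [div_pow, div_mul_eq_mul_div, ← div_eq_mul_inv, div_le_div_iff₀ (by positivity) h0,
            mul_assoc, ← pow_succ]
          gcongr
        · exact hmeas.aemeasurable

lemma Am_single (x : Fin K → ℝ) (a : Fin p) :
    (Pi.single a 1 : Fin p → ℝ) ⬝ᵥ (Am v x).mulVec (Pi.single a 1) = Am v x a a := by
  simp

lemma exp_moment {D : ℝ} (hD : 0 < D) (a : Fin p)
    (h1 : ∀ u : Fin p → ℝ, ∑ a, u a ^ 2 = 1 → ff v u 1 ≤ D) :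
    ∫⁻ x, ENNReal.ofReal (Real.exp ((2 * D)⁻¹ * Am v x a a)) ∂(gaussPi (Fin K)) ≤ 2 := by
  set u : Fin p → ℝ := Pi.single a 1 with hu
  have hu1 : ∑ b, u b ^ 2 = 1 := by
    simp [hu, Pi.single_apply, ite_pow]
  have hf := h1 u hu1
  have hs : ∑ i, 2 * lam v u i ≤ D := by
    have := one_add_sum_le Finset.univ (fun i => 2 * (1 * lam v u i))
      (fun i => by linarith [lam_nonneg v u i])
    simp only [one_mul] at this
    unfold ff at hf
    simp only [one_mul] at hf
    linarith
  have hi : ∀ i, 2 * lam v u i ≤ D := fun i =>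
    (Finset.single_le_sum (f := fun i => 2 * lam v u i)
      (fun i _ => by linarith [lam_nonneg v u i]) (Finset.mem_univ i)).trans hs
  have hi2 : ∀ i, (2 * D)⁻¹ * (2 * lam v u i) ≤ 1 / 2 := fun i => by
    calc (2 * D)⁻¹ * (2 * lam v u i) ≤ (2 * D)⁻¹ * D := by gcongr; exact hi i
      _ = 1 / 2 := by field_simp
  have hl := laplace v u (-(2 * D)⁻¹) (fun i => by linarith [hi2 i])
  have e : ∀ x, -(-(2 * D)⁻¹ * (u ⬝ᵥ (Am v x).mulVec u)) = (2 * D)⁻¹ * Am v x a a := by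
    intro x; rw [hu, Am_single]; ring
  simp_rw [e] at hl
  rw [hl]
  have hff : 1 / 2 ≤ ff v u (-(2 * D)⁻¹) := by
    have := one_sub_sum_le Finset.univ (fun i => (2 * D)⁻¹ * (2 * lam v u i))
      (fun i => by have := lam_nonneg v u i; positivity) (fun i => by linarith [hi2 i])
    have h2 : ∑ i, (2 * D)⁻¹ * (2 * lam v u i) ≤ 1 / 2 := by
      rw [← Finset.mul_sum]
      calc (2 * D)⁻¹ * _ ≤ (2 * D)⁻¹ * D := by gcongr
        _ = 1 / 2 := by field_simp
    have e2 : ff v u (-(2 * D)⁻¹) = ∏ i, (1 - (2 * D)⁻¹ * (2 * lam v u i)) :=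
      Finset.prod_congr rfl fun i _ => by ring
    rw [e2]; linarith
  have : (√(ff v u (-(2 * D)⁻¹)))⁻¹ ≤ 2 := by
    rw [inv_le_comm₀ (Real.sqrt_pos.2 (by linarith)) (by norm_num)]
    refine Real.le_sqrt_of_sq_le ?_
    norm_num; norm_num at hff; linarith
  calc _ ≤ ENNReal.ofReal 2 := ENNReal.ofReal_le_ofReal this
    _ = 2 := by simp

lemma Am_entry_le (x : Fin K → ℝ) (a b : Fin p) : |Am v x a b| ≤ ∑ c, Am v x c c := by
  have hd : ∀ c, 0 ≤ Am v x c c := fun c => (Am_psd v x).diag_nonneg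
  have h1 : ∀ c, Am v x c c ≤ ∑ c, Am v x c c := fun c =>
    Finset.single_le_sum (f := fun c => Am v x c c) (fun c _ => hd c) (Finset.mem_univ c)
  have h2 : |Am v x a b| ≤ (Am v x a a + Am v x b b) / 2 := by
    simp only [Am_apply]
    rw [← Finset.sum_add_distrib, Finset.sum_div]
    refine (Finset.abs_sum_le_sum_abs _ _).trans (Finset.sum_le_sum fun i _ => ?_)
    rw [abs_le]
    constructor <;> nlinarith [sq_nonneg ((∑ k, v i a k * x k) + (∑ k, v i b k * x k)),
      sq_nonneg ((∑ k, v i a k * x k) - (∑ k, v i b k * x k))]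
  linarith [h1 a, h1 b]

lemma tr_moment (hp : 1 ≤ p) {D : ℝ} (hD : 0 < D) (N : ℕ)
    (h1 : ∀ u : Fin p → ℝ, ∑ a, u a ^ 2 = 1 → ff v u 1 ≤ D) :
    ∫⁻ x, ENNReal.ofReal ((1 + ∑ c, Am v x c c) ^ N) ∂(gaussPi (Fin K))
      ≤ ENNReal.ofReal (N.factorial / ((2 * D * p)⁻¹) ^ N * Real.exp ((2 * D * p)⁻¹)) * (p * 2) := by
  have hp0 : (0 : ℝ) < p := by exact_mod_cast hp
  set s := (2 * D * p)⁻¹ with hs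
  have hs0 : 0 < s := by positivity
  have hd : ∀ x c, 0 ≤ Am v x c c := fun x c => (Am_psd v x).diag_nonneg
  have hpt : ∀ x, (1 + ∑ c, Am v x c c) ^ N ≤
      (N.factorial / s ^ N * Real.exp s) * ∑ a, Real.exp ((2 * D)⁻¹ * Am v x a a) := by
    intro x
    set τ := ∑ c, Am v x c c with hτ
    have hτ0 : 0 ≤ τ := Finset.sum_nonneg fun c _ => hd x c
    have e1 := Real.pow_div_factorial_le_exp (s * (1 + τ)) (by positivity) N
    have e2 : (1 + τ) ^ N ≤ N.factorial / s ^ N * Real.exp (s * (1 + τ)) := by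
      rw [div_le_iff₀ (by positivity), mul_pow] at e1
      rw [div_mul_eq_mul_div, le_div_iff₀ (by positivity)]
      linarith
    refine e2.trans ?_
    rw [mul_add, mul_one, Real.exp_add, mul_assoc]
    gcongr
    have : Nonempty (Fin p) := ⟨⟨0, hp⟩⟩
    obtain ⟨a, -, ha⟩ := Finset.exists_max_image Finset.univ (fun c => Am v x c c)
      Finset.univ_nonempty
    have h3 : τ ≤ p * Am v x a a := by
      calc τ ≤ ∑ c : Fin p, Am v x a a := Finset.sum_le_sum fun c hc => ha c hc
        _ = _ := by simp
    calc Real.exp (s * τ) ≤ Real.exp ((2 * D)⁻¹ * Am v x a a) := by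
          refine Real.exp_le_exp.2 ?_
          calc s * τ ≤ s * (p * Am v x a a) := by gcongr
            _ = _ := by rw [hs]; field_simp
      _ ≤ _ := Finset.single_le_sum (f := fun a => Real.exp ((2 * D)⁻¹ * Am v x a a))
          (fun _ _ => (Real.exp_pos _).le) (Finset.mem_univ a)
  calc _ ≤ ∫⁻ x, ENNReal.ofReal (N.factorial / s ^ N * Real.exp s) *
          ∑ a, ENNReal.ofReal (Real.exp ((2 * D)⁻¹ * Am v x a a)) ∂(gaussPi (Fin K)) := by
        refine lintegral_mono fun x => ?_
        simp only
        rw [← ENNReal.ofReal_sum_of_nonneg (fun _ _ => (Real.exp_pos _).le),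
          ← ENNReal.ofReal_mul (by positivity)]
        exact ENNReal.ofReal_le_ofReal (hpt x)
    _ = ENNReal.ofReal (N.factorial / s ^ N * Real.exp s) *
          ∑ a, ∫⁻ x, ENNReal.ofReal (Real.exp ((2 * D)⁻¹ * Am v x a a)) ∂(gaussPi (Fin K)) := by
        rw [lintegral_const_mul _ (by fun_prop), lintegral_finsetSum _ (fun a _ => by fun_prop)]
    _ ≤ _ := by
        gcongr
        calc _ ≤ ∑ a : Fin p, (2 : ℝ≥0∞) := Finset.sum_le_sum fun a _ => exp_moment v hD a h1
          _ = _ := by simp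

lemma inv_entry_le (x : Fin K → ℝ) (a b : Fin p) :
    |(Am v x)⁻¹ a b| ≤ ((Am v x).det)⁻¹ * (p.factorial * (1 + ∑ c, Am v x c c) ^ p) := by
  have hτ0 : 0 ≤ ∑ c, Am v x c c := Finset.sum_nonneg fun c _ => (Am_psd v x).diag_nonneg
  have hd := (Am_psd v x).det_nonneg
  rw [Matrix.inv_def, Matrix.smul_apply, smul_eq_mul, abs_mul, Ring.inverse_eq_inv', abs_inv,
    abs_of_nonneg hd]
  gcongr
  rw [Matrix.adjugate_apply]
  have := Matrix.det_le (A := (Am v x).updateRow b (Pi.single a 1)) (abv := AbsoluteValue.abs)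
    (x := 1 + ∑ c, Am v x c c) ?_
  · simpa using this
  · intro i j
    rw [Matrix.updateRow_apply]
    simp only [AbsoluteValue.abs_apply]
    split_ifs
    · rw [Pi.single_apply]; split_ifs <;> simp <;> linarith
    · linarith [Am_entry_le v x i j]

lemma inv_moment (r : ℕ) (hr : 1 ≤ r) (a b : Fin p) :
    ∫⁻ x, ENNReal.ofReal (|(Am v x)⁻¹ a b| ^ r) ∂(gaussPi (Fin K)) ≤
      ENNReal.ofReal ((p.factorial : ℝ) ^ r) *
      (∫⁻ x, (ENNReal.ofReal ((Am v x).det) ^ (2 * r))⁻¹ ∂gaussPi (Fin K) +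
      ∫⁻ x, ENNReal.ofReal ((1 + ∑ c, Am v x c c) ^ (p * r * 2)) ∂(gaussPi (Fin K))) := by
  rw [← lintegral_add_right _ (by fun_prop), ← lintegral_const_mul' _ _ ENNReal.ofReal_ne_top]
  refine lintegral_mono fun x => ?_
  have hd := (Am_psd v x).det_nonneg
  rcases hd.eq_or_lt with h | h
  · simp only [← h]
    rw [ENNReal.ofReal_zero, zero_pow (by omega), ENNReal.inv_zero, top_add, ENNReal.mul_top]
    · exact le_top
    · have : 0 < (p.factorial : ℝ) := by exact_mod_cast Nat.factorial_pos p
      simpa using fun h : p.factorial = 0 => absurd h (Nat.factorial_ne_zero p)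
  · simp only
    set τ := ∑ c, Am v x c c with hτ
    have hτ0 : 0 ≤ τ := Finset.sum_nonneg fun c _ => (Am_psd v x).diag_nonneg
    set d := (Am v x).det with hdd
    rw [← ENNReal.ofReal_pow hd, ← ENNReal.ofReal_inv_of_pos (by positivity),
      ← ENNReal.ofReal_add (by positivity) (by positivity), ← ENNReal.ofReal_mul (by positivity)]
    refine ENNReal.ofReal_le_ofReal ?_
    calc |(Am v x)⁻¹ a b| ^ r ≤ (d⁻¹ * (p.factorial * (1 + τ) ^ p)) ^ r :=
          pow_le_pow_left₀ (abs_nonneg _) (inv_entry_le v x a b) r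
      _ = (p.factorial : ℝ) ^ r * ((d ^ r)⁻¹ * (1 + τ) ^ (p * r)) := by
          rw [mul_pow, mul_pow, ← pow_mul, inv_pow]; ring
      _ ≤ _ := by
          gcongr
          have e1 : (d ^ (2 * r))⁻¹ = ((d ^ r)⁻¹) ^ 2 := by rw [inv_pow, ← pow_mul, mul_comm r]
          rw [e1, pow_mul (1 + τ) (p * r) 2]
          nlinarith [sq_nonneg ((d ^ r)⁻¹ - (1 + τ) ^ (p * r)), sq_nonneg ((d ^ r)⁻¹),
            sq_nonneg ((1 + τ) ^ (p * r))]

end single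

section seq
variable {p : ℕ} {K : ℕ → ℕ} (v : (n : ℕ) → Fin n → Fin p → Fin (K n) → ℝ)
  {Sig : Matrix (Fin p) (Fin p) ℝ}

lemma bad_tendsto
    (hprob : ∀ (a b : Fin p), ∀ ε > (0:ℝ),
      Tendsto (fun n => gaussPi (Fin (K n)) {x | ε ≤ |Am (v n) x a b - Sig a b|}) atTop (𝓝 0))
    {ε : ℝ} (hε : 0 < ε) :
    Tendsto (fun n => gaussPi (Fin (K n)) (bad (v n) Sig ε)) atTop (𝓝 0) := by
  have h : Tendsto (fun n => ∑ a, ∑ b, gaussPi (Fin (K n))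
      {x | ε ≤ |Am (v n) x a b - Sig a b|}) atTop (𝓝 (∑ a : Fin p, ∑ b : Fin p, 0)) :=
    tendsto_finsetSum _ fun a _ => tendsto_finsetSum _ fun b _ => hprob a b ε hε
  simp only [Finset.sum_const_zero] at h
  refine tendsto_of_tendsto_of_tendsto_of_le_of_le tendsto_const_nhds h (fun _ => zero_le)
    fun n => ?_
  have : bad (v n) Sig ε = ⋃ a, ⋃ b, {x | ε ≤ |Am (v n) x a b - Sig a b|} := by ext; simp [bad]
  simp only
  rw [this]
  refine (measure_iUnion_fintype_le _ _).trans (Finset.sum_le_sum fun a _ => ?_)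
  exact measure_iUnion_fintype_le _ _

lemma exists_good
    (hb : ∀ ε : ℝ, 0 < ε →
      Tendsto (fun n => gaussPi (Fin (K n)) (bad (v n) Sig ε)) atTop (𝓝 0)) {ε : ℝ} (hε : 0 < ε) : ∃ n x, x ∉ bad (v n) Sig ε := by
  obtain ⟨n, hn⟩ := ((hb ε hε).eventually (gt_mem_nhds zero_lt_one)).exists
  refine ⟨n, ?_⟩
  by_contra hcon
  push Not at hcon
  have : bad (v n) Sig ε = Set.univ := Set.eq_univ_of_forall hcon
  rw [this, measure_univ] at hn
  exact lt_irrefl _ hn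

lemma Sig_psd
    (hb : ∀ ε : ℝ, 0 < ε →
      Tendsto (fun n => gaussPi (Fin (K n)) (bad (v n) Sig ε)) atTop (𝓝 0)) : Sig.PosSemidef := by
  refine Matrix.PosSemidef.of_dotProduct_mulVec_nonneg ?_ ?_
  · ext a b
    simp only [Matrix.conjTranspose_apply, star_trivial]
    refine eq_of_abs_sub_le_all fun ε hε => ?_
    obtain ⟨n, x, hx⟩ := exists_good v hb (half_pos hε)
    simp only [bad, Set.mem_ofPred_eq, not_exists, not_le] at hx
    have h1 := abs_lt.1 (hx a b)
    have h2 := abs_lt.1 (hx b a)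
    have h3 : Am (v n) x a b = Am (v n) x b a := by
      simp only [Am_apply]; exact Finset.sum_congr rfl fun i _ => mul_comm _ _
    rw [abs_le]
    constructor <;> linarith
  · intro u
    simp only [star_trivial]
    set r := ∑ a, u a ^ 2 with hr
    have hr0 : 0 ≤ r := Finset.sum_nonneg fun a _ => sq_nonneg _
    refine le_of_forall_pos_le_add fun δ hδ => ?_
    obtain ⟨n, x, hx⟩ := exists_good v hb (ε := δ / (p * r + 1)) (by positivity)
    simp only [bad, Set.mem_ofPred_eq, not_exists, not_le] at hx
    have h1 := quad_diff (Am (v n) x - Sig) (fun a b => (hx a b).le) u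
    rw [Matrix.sub_mulVec, dotProduct_sub, ← hr] at h1
    have h2 := (abs_le.1 h1).2
    have h3 := Am_quad_nonneg (v n) x u
    have h4 : δ / (p * r + 1) * p * r ≤ δ := by
      rw [mul_assoc, div_mul_eq_mul_div, div_le_iff₀ (by positivity)]
      nlinarith
    linarith

lemma Sig_lower
    (hb : ∀ ε : ℝ, 0 < ε →
      Tendsto (fun n => gaussPi (Fin (K n)) (bad (v n) Sig ε)) atTop (𝓝 0)) (hp : 1 ≤ p) (hSig : IsUnit Sig.det) :
    ∃ c > 0, ∀ u : Fin p → ℝ, ∑ a, u a ^ 2 = 1 → c ≤ u ⬝ᵥ Sig.mulVec u := by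
  have hpd : Sig.PosDef :=
    (Sig_psd v hb).posDef_iff_isUnit.2 ((Matrix.isUnit_iff_isUnit_det _).2 hSig)
  have : Nonempty (Fin p) := ⟨⟨0, hp⟩⟩
  obtain ⟨i, -, hi⟩ := Finset.exists_min_image Finset.univ hpd.1.eigenvalues Finset.univ_nonempty
  refine ⟨hpd.1.eigenvalues i, hpd.eigenvalues_pos i, fun u hu => ?_⟩
  rw [quad_eq hpd.1, ← mul_one (hpd.1.eigenvalues i), ← hu, ← rot_sq hpd.1, Finset.mul_sum]
  exact Finset.sum_le_sum fun j hj => mul_le_mul_of_nonneg_right (hi j hj) (sq_nonneg _)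

lemma Sig_upper (Sig : Matrix (Fin p) (Fin p) ℝ) :
    ∃ C, ∀ u : Fin p → ℝ, ∑ a, u a ^ 2 = 1 → u ⬝ᵥ Sig.mulVec u ≤ C := by
  refine ⟨(∑ a, ∑ b, |Sig a b|) * p, fun u hu => ?_⟩
  have := quad_diff Sig (ε := ∑ a, ∑ b, |Sig a b|) (fun a b => ?_) u
  · rw [hu, mul_one] at this
    exact (le_abs_self _).trans this
  · exact (Finset.single_le_sum (f := fun b => |Sig a b|) (fun _ _ => abs_nonneg _)
      (Finset.mem_univ b)).trans (Finset.single_le_sum (f := fun a => ∑ b, |Sig a b|)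
      (fun _ _ => Finset.sum_nonneg fun _ _ => abs_nonneg _) (Finset.mem_univ a))

lemma unif_one
    (hb : ∀ ε : ℝ, 0 < ε →
      Tendsto (fun n => gaussPi (Fin (K n)) (bad (v n) Sig ε)) atTop (𝓝 0)) : ∃ D > 0, ∃ N : ℕ, ∀ n ≥ N, ∀ u : Fin p → ℝ, ∑ a, u a ^ 2 = 1 →
    ff (v n) u 1 ≤ D := by
  obtain ⟨C, hC⟩ := Sig_upper Sig
  have h12 : (0 : ℝ≥0∞) < 1 / 2 := by simp
  obtain ⟨N, hN⟩ := eventually_atTop.1 ((hb 1 one_pos).eventually (ge_mem_nhds h12))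
  exact ⟨4 * Real.exp (2 * (C + p)), by positivity, N, fun n hn u hu =>
    ff_one_le (v n) (hN n hn) hu (hC u hu)⟩

lemma unif_T
    (hb : ∀ ε : ℝ, 0 < ε →
      Tendsto (fun n => gaussPi (Fin (K n)) (bad (v n) Sig ε)) atTop (𝓝 0)) (hp : 1 ≤ p) (hSig : IsUnit Sig.det) {D : ℝ} (hD : 0 < D) (m : ℕ) :
    ∃ T : ℝ, 1 ≤ T ∧ ∃ N : ℕ, ∀ n ≥ N, ∀ u : Fin p → ℝ, ∑ a, u a ^ 2 = 1 →
    T ^ (2 * m) * D + 1 ≤ ff (v n) u T := by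
  obtain ⟨c, hc, hcu⟩ := Sig_lower v hb hp hSig
  have hp0 : (0 : ℝ) < p := by exact_mod_cast hp
  have ht : Tendsto (fun T : ℝ => (T ^ (2 * m) * D + 1) * Real.exp (-(c * T))) atTop (𝓝 0) := by
    have h0 : ∀ j : ℕ, Tendsto (fun T : ℝ => T ^ j * Real.exp (-(c * T))) atTop (𝓝 0) := by
      intro j
      refine (tendsto_rpow_mul_exp_neg_mul_atTop_nhds_zero j c hc).congr fun T => ?_
      rw [Real.rpow_natCast, neg_mul]
    have h1 := h0 (2 * m)
    have h2 := h0 0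
    have := (h1.const_mul D).add h2
    simp only [mul_zero, add_zero] at this
    refine this.congr fun T => by ring
  obtain ⟨T, hT1, hT⟩ := ((eventually_ge_atTop (1:ℝ)).and
    (ht.eventually (ge_mem_nhds (show (0:ℝ) < 1 / 4 by norm_num)))).exists
  have hT0 : 0 < T := by linarith
  set E := T ^ (2 * m) * D + 1 with hE
  have hE0 : 0 < E := by positivity
  have hsE : 0 < √E := Real.sqrt_pos.2 hE0
  set δ := (√E)⁻¹ / 2 with hδ
  have hδ0 : 0 < δ := by positivity
  have hexp : Real.exp (-(T * (c / 2))) ≤ δ := by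
    refine (sq_le_sq₀ (Real.exp_pos _).le hδ0.le).1 ?_
    rw [← Real.exp_nat_mul, hδ, div_pow, inv_pow, Real.sq_sqrt hE0.le, ← one_div, div_div,
      le_div_iff₀ (by positivity)]
    have : ((2 : ℕ) : ℝ) * -(T * (c / 2)) = -(c * T) := by push_cast; ring
    rw [this]
    nlinarith
  obtain ⟨N, hN⟩ := eventually_atTop.1 ((hb (c / 2 / p) (by positivity)).eventually
    (ge_mem_nhds (ENNReal.ofReal_pos.2 hδ0)))
  refine ⟨T, hT1, N, fun n hn u hu => ?_⟩
  refine ff_T_ge (v n) hT0.le hδ0.le (hN n hn) ?_ hu (hcu u hu) hE0 ?_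
  · rw [div_mul_cancel₀ _ hp0.ne']
  · calc _ ≤ δ + δ := by gcongr
      _ = _ := by rw [hδ]; ring

lemma neg_moment_unif
    (hb : ∀ ε : ℝ, 0 < ε →
      Tendsto (fun n => gaussPi (Fin (K n)) (bad (v n) Sig ε)) atTop (𝓝 0)) (hp : 1 ≤ p) (hSig : IsUnit Sig.det) (q : ℕ) (hq : 1 ≤ q) :
    ∃ C : ℝ≥0∞, C < ⊤ ∧ ∃ N : ℕ, ∀ n ≥ N,
      ∫⁻ x, (ENNReal.ofReal ((Am (v n) x).det) ^ q)⁻¹ ∂gaussPi (Fin (K n)) ≤ C := by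
  obtain ⟨D, hD, N1, h1⟩ := unif_one v hb
  obtain ⟨T, hT, N2, h2⟩ := unif_T v hb hp hSig hD (p * (2 * q + 1))
  refine ⟨CC p (2 * q) T, CC_lt _ _ (by omega) _, max N1 N2, fun n hn => ?_⟩
  exact neg_moment (v n) hT q hq (decay (v n) hT _ (h1 n (le_of_max_le_left hn))
    (h2 n (le_of_max_le_right hn)))

lemma inv_moment_unif
    (hb : ∀ ε : ℝ, 0 < ε →
      Tendsto (fun n => gaussPi (Fin (K n)) (bad (v n) Sig ε)) atTop (𝓝 0)) (hp : 1 ≤ p) (hSig : IsUnit Sig.det) (r : ℕ) (hr : 1 ≤ r) (a b : Fin p) :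
    ∃ C : ℝ≥0∞, C < ⊤ ∧ ∃ N : ℕ, ∀ n ≥ N,
      ∫⁻ x, ENNReal.ofReal (|(Am (v n) x)⁻¹ a b| ^ r) ∂(gaussPi (Fin (K n))) ≤ C := by
  obtain ⟨D, hD, N1, h1⟩ := unif_one v hb
  obtain ⟨C, hC, N2, h2⟩ := neg_moment_unif v hb hp hSig (2 * r) (by omega)
  refine ⟨_, ?_, max N1 N2, fun n hn => (inv_moment (v n) r hr a b).trans
    (mul_le_mul_right (add_le_add (h2 n (le_of_max_le_right hn))
      (tr_moment (v n) hp hD _ (h1 n (le_of_max_le_left hn)))) _)⟩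
  refine ENNReal.mul_lt_top ENNReal.ofReal_lt_top (ENNReal.add_lt_top.2 ⟨hC, ?_⟩)
  exact ENNReal.mul_lt_top ENNReal.ofReal_lt_top (ENNReal.mul_lt_top (by simp) (by simp))

lemma diff_moment_unif
    (hb : ∀ ε : ℝ, 0 < ε →
      Tendsto (fun n => gaussPi (Fin (K n)) (bad (v n) Sig ε)) atTop (𝓝 0)) (hp : 1 ≤ p) (hSig : IsUnit Sig.det) (r : ℕ) (hr : 1 ≤ r) (a b : Fin p) :
    ∃ C : ℝ≥0∞, C < ⊤ ∧ ∃ N : ℕ, ∀ n ≥ N,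
      ∫⁻ x, ENNReal.ofReal (|(Am (v n) x)⁻¹ a b - Sig⁻¹ a b| ^ r) ∂(gaussPi (Fin (K n))) ≤ C := by
  obtain ⟨C, hC, N, h⟩ := inv_moment_unif v hb hp hSig r hr a b
  refine ⟨ENNReal.ofReal (2 ^ (r - 1)) * (C + ENNReal.ofReal (|Sig⁻¹ a b| ^ r)),
    ENNReal.mul_lt_top ENNReal.ofReal_lt_top (ENNReal.add_lt_top.2 ⟨hC, ENNReal.ofReal_lt_top⟩),
    N, fun n hn => ?_⟩
  calc _ ≤ ∫⁻ x, ENNReal.ofReal (2 ^ (r - 1)) * (ENNReal.ofReal (|(Am (v n) x)⁻¹ a b| ^ r)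
          + ENNReal.ofReal (|Sig⁻¹ a b| ^ r)) ∂(gaussPi (Fin (K n))) := by
        refine lintegral_mono fun x => ?_
        simp only
        rw [← ENNReal.ofReal_add (by positivity) (by positivity),
          ← ENNReal.ofReal_mul (by positivity)]
        refine ENNReal.ofReal_le_ofReal ?_
        exact (pow_le_pow_left₀ (abs_nonneg _) (abs_sub _ _) r).trans
          (add_pow_le (abs_nonneg _) (abs_nonneg _) r)
    _ = ENNReal.ofReal (2 ^ (r - 1)) * ((∫⁻ x, ENNReal.ofReal (|(Am (v n) x)⁻¹ a b| ^ r)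
          ∂(gaussPi (Fin (K n)))) + ENNReal.ofReal (|Sig⁻¹ a b| ^ r)) := by
        rw [lintegral_const_mul' _ _ ENNReal.ofReal_ne_top, lintegral_add_right _ (by fun_prop)]
        simp
    _ ≤ _ := by gcongr; exact h n hn

lemma inv_close (hSig : IsUnit Sig.det) (a b : Fin p) {ε : ℝ} (hε : 0 < ε) :
    ∃ δ > 0, ∀ n x, x ∉ bad (v n) Sig δ → |(Am (v n) x)⁻¹ a b - Sig⁻¹ a b| < ε := by
  have hc : ContinuousAt (fun M : Fin p → Fin p → ℝ =>
      ((Matrix.of M : Matrix (Fin p) (Fin p) ℝ)⁻¹) a b) Sig := by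
    have e : (fun M : Fin p → Fin p → ℝ => ((Matrix.of M : Matrix (Fin p) (Fin p) ℝ)⁻¹) a b)
      = fun M => (Matrix.of M).det⁻¹ * (Matrix.of M).adjugate a b := by
      ext M
      rw [Matrix.inv_def, Matrix.smul_apply, smul_eq_mul, Ring.inverse_eq_inv']
    rw [e]
    have h1 : Continuous fun M : Fin p → Fin p → ℝ => (Matrix.of M).det :=
      Continuous.matrix_det (A := fun M : Fin p → Fin p → ℝ => Matrix.of M) continuous_id
    have h2 : Continuous fun M : Fin p → Fin p → ℝ => (Matrix.of M).adjugate a b :=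
      (Continuous.matrix_adjugate (A := fun M : Fin p → Fin p → ℝ => Matrix.of M)
        continuous_id).matrix_elem a b
    exact (h1.continuousAt.inv₀ hSig.ne_zero).mul h2.continuousAt
  obtain ⟨δ, hδ, h⟩ := Metric.continuousAt_iff.1 hc ε hε
  refine ⟨δ, hδ, fun n x hx => ?_⟩
  simp only [bad, Set.mem_ofPred_eq, not_exists, not_le] at hx
  have h3 : dist (fun i j => Am (v n) x i j) (fun i j => Sig i j) < δ :=
    (dist_pi_lt_iff hδ).2 fun i => (dist_pi_lt_iff hδ).2 fun j => by
      rw [Real.dist_eq]; exact hx i j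
  have := h h3
  rwa [Real.dist_eq] at this

lemma inv_meas {n K : ℕ} (v : Fin n → Fin p → Fin K → ℝ) (a b : Fin p) :
    Measurable fun x => (Am v x)⁻¹ a b := by
  have e : (fun x => (Am v x)⁻¹ a b) = fun x => (Am v x).det⁻¹ * (Am v x).adjugate a b := by
    ext x
    rw [Matrix.inv_def, Matrix.smul_apply, smul_eq_mul, Ring.inverse_eq_inv']
  have hA : Continuous fun x => Am v x := by
    refine continuous_matrix fun i j => Am_cont v i j
  rw [e]
  exact hA.matrix_det.measurable.inv.mul (hA.matrix_adjugate.matrix_elem a b).measurable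

lemma inv_tendsto
    (hb : ∀ ε : ℝ, 0 < ε →
      Tendsto (fun n => gaussPi (Fin (K n)) (bad (v n) Sig ε)) atTop (𝓝 0)) (hp : 1 ≤ p) (hSig : IsUnit Sig.det) (q : ℕ) (hq : 1 ≤ q) (a b : Fin p) :
    Tendsto (fun n => ∫⁻ x, ENNReal.ofReal (|(Am (v n) x)⁻¹ a b - Sig⁻¹ a b| ^ q)
      ∂(gaussPi (Fin (K n)))) atTop (𝓝 0) := by
  obtain ⟨C, hC, N, hN⟩ := diff_moment_unif v hb hp hSig (2 * q) (by omega) a b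
  lift C to ℝ≥0 using hC.ne
  rw [ENNReal.tendsto_nhds_zero]
  intro η0 hη0
  -- choose a real tolerance
  obtain ⟨η, hη, hηη⟩ : ∃ η : ℝ, 0 < η ∧ ENNReal.ofReal η ≤ η0 := by
    rcases eq_or_ne η0 ⊤ with rfl | h
    · exact ⟨1, one_pos, le_top⟩
    · exact ⟨η0.toReal, ENNReal.toReal_pos hη0.ne' h, (ENNReal.ofReal_toReal h).le⟩
  set ε : ℝ := min 1 (η / 3) with hεdef
  have hε : 0 < ε := by positivity
  have hεq : ε ^ q ≤ η / 3 :=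
    (pow_le_of_le_one hε.le (min_le_left _ _) (by omega)).trans (min_le_right _ _)
  set κ : ℝ := η / 3 / (C + 1) with hκdef
  have hκ : 0 < κ := by positivity
  have hκC : κ * C ≤ η / 3 := by
    rw [hκdef, div_mul_eq_mul_div, div_le_iff₀ (by positivity)]
    nlinarith [C.2]
  obtain ⟨δ, hδ, hclose⟩ := inv_close v hSig a b hε
  have hpos : 0 < κ * (η / 3) := by positivity
  filter_upwards [eventually_ge_atTop N,
    (hb δ hδ).eventually (ge_mem_nhds (ENNReal.ofReal_pos.2 hpos))] with n hn hbn
  refine le_trans ?_ hηη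
  calc _ ≤ ∫⁻ x, ((ENNReal.ofReal (ε ^ q) + ENNReal.ofReal κ *
        ENNReal.ofReal (|(Am (v n) x)⁻¹ a b - Sig⁻¹ a b| ^ (2 * q))) +
        (bad (v n) Sig δ).indicator (fun _ => ENNReal.ofReal κ⁻¹) x) ∂(gaussPi (Fin (K n))) := by
        refine lintegral_mono fun x => ?_
        by_cases hx : x ∈ bad (v n) Sig δ
        · simp only [Set.indicator_of_mem hx]
          rw [← ENNReal.ofReal_mul hκ.le, ← ENNReal.ofReal_add (by positivity) (by positivity),
            ← ENNReal.ofReal_add (by positivity) (by positivity)]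
          refine ENNReal.ofReal_le_ofReal ?_
          rw [mul_comm 2 q, pow_mul]
          set y := |(Am (v n) x)⁻¹ a b - Sig⁻¹ a b| ^ q with hy
          have hy0 : 0 ≤ y := by positivity
          have e : κ * y ^ 2 + κ⁻¹ - y = κ * (y - κ⁻¹ / 2) ^ 2 + 3 / 4 * κ⁻¹ := by
            field_simp; ring
          have : 0 ≤ κ * (y - κ⁻¹ / 2) ^ 2 + 3 / 4 * κ⁻¹ := by positivity
          have : 0 < ε ^ q := by positivity
          linarith
        · refine le_add_right (le_add_right ?_)
          exact ENNReal.ofReal_le_ofReal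
            (pow_le_pow_left₀ (abs_nonneg _) (hclose n x hx).le q)
    _ = (ENNReal.ofReal (ε ^ q) + ENNReal.ofReal κ * ∫⁻ x,
        ENNReal.ofReal (|(Am (v n) x)⁻¹ a b - Sig⁻¹ a b| ^ (2 * q)) ∂(gaussPi (Fin (K n)))) +
        ENNReal.ofReal κ⁻¹ * gaussPi (Fin (K n)) (bad (v n) Sig δ) := by
        rw [lintegral_add_right _ (measurable_const.indicator (bad_meas _ _ _)),
          lintegral_add_left measurable_const, lintegral_const_mul' _ _ ENNReal.ofReal_ne_top,
          lintegral_indicator_const (bad_meas _ _ _)]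
        simp
    _ ≤ (ENNReal.ofReal (ε ^ q) + ENNReal.ofReal κ * C) +
        ENNReal.ofReal κ⁻¹ * ENNReal.ofReal (κ * (η / 3)) := by
        gcongr
        exact hN n hn
    _ = ENNReal.ofReal (ε ^ q + κ * C + κ⁻¹ * (κ * (η / 3))) := by
        rw [← ENNReal.ofReal_coe_nnreal, ← ENNReal.ofReal_mul hκ.le,
          ← ENNReal.ofReal_mul (by positivity), ← ENNReal.ofReal_add (by positivity) (by positivity),
          ← ENNReal.ofReal_add (by positivity) (by positivity)]
    _ ≤ _ := by
        refine ENNReal.ofReal_le_ofReal ?_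
        rw [inv_mul_cancel_left₀ hκ.ne']
        linarith

end seq

end WishartAux

/-- Control of the inverse of strongly correlated Wishart-type matrices:
if `A_n = B_nᵀ B_n` with jointly Gaussian entries `B_n(i,j) = ⟨v_{i,j}, N⟩` and `A_n → Σ` in
probability with `Σ` invertible, then the negative moments of `det A_n` are eventually bounded,
and `A_n⁻¹ → Σ⁻¹` in every `L^q`. -/
theorem wishart_inverse_control (p : ℕ) (hp : 1 ≤ p) (K : ℕ → ℕ)
    (v : (n : ℕ) → Fin n → Fin p → Fin (K n) → ℝ)
    (A : (n : ℕ) → (Fin (K n) → ℝ) → Matrix (Fin p) (Fin p) ℝ)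
    (hA : ∀ n x, A n x = Matrix.of fun a b =>
      ∑ i : Fin n, (∑ k, v n i a k * x k) * (∑ k, v n i b k * x k))
    (Sig : Matrix (Fin p) (Fin p) ℝ) (hSig : IsUnit Sig.det)
    (hprob : ∀ (a b : Fin p), ∀ ε > (0:ℝ),
      Tendsto (fun n => gaussPi (Fin (K n)) {x | ε ≤ |A n x a b - Sig a b|}) atTop (𝓝 0)) :
    (∀ q : ℕ, 1 ≤ q → ∃ (N : ℕ) (C : ℝ), 0 < C ∧ ∀ n ≥ N,
      ∫⁻ x, (ENNReal.ofReal ((A n x).det) ^ q)⁻¹ ∂gaussPi (Fin (K n))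
        ≤ ENNReal.ofReal C) ∧
    (∀ q : ℕ, 1 ≤ q → ∀ a b : Fin p,
      Tendsto
        (fun n => ∫ x, |(A n x)⁻¹ a b - Sig⁻¹ a b| ^ q ∂gaussPi (Fin (K n)))
        atTop (𝓝 0)) := by
  have hA' : ∀ n x, A n x = WishartAux.Am (v n) x := by
    intro n x
    ext a b
    rw [hA, WishartAux.Am_apply, Matrix.of_apply]
  simp only [hA'] at hprob ⊢
  have hb : ∀ ε : ℝ, 0 < ε → Tendsto (fun n => gaussPi (Fin (K n))
      (WishartAux.bad (v n) Sig ε)) atTop (𝓝 0) :=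
    fun ε hε => WishartAux.bad_tendsto v hprob hε
  refine ⟨fun q hq => ?_, fun q hq a b => ?_⟩
  · obtain ⟨C, hC, N, h⟩ := WishartAux.neg_moment_unif v hb hp hSig q hq
    refine ⟨N, C.toReal + 1, by positivity, fun n hn => (h n hn).trans ?_⟩
    calc C = ENNReal.ofReal C.toReal := (ENNReal.ofReal_toReal hC.ne).symm
      _ ≤ _ := ENNReal.ofReal_le_ofReal (by linarith)
  · have h := (ENNReal.tendsto_toReal ENNReal.zero_ne_top).comp
      (WishartAux.inv_tendsto v hb hp hSig q hq a b)
    rw [ENNReal.toReal_zero] at h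
    refine h.congr fun n => ?_
    have hm := WishartAux.inv_meas (v n) a b
    rw [integral_eq_lintegral_of_nonneg_ae (ae_of_all _ fun x => by positivity)
      ((hm.sub_const _).abs.pow_const q).aestronglyMeasurable]
    rfl
end

section
/- Let m, q, k ∈ ℕ with 1 ≤ k ≤ m. There exist q' ∈ ℕ and C > 0 such that the following holds for every K ∈ ℕ and every polynomial P of total degree at most m in K variables with ∫ P² dγ_K = 1. Let N ~ γ_K and let (G_{j,i})_{1≤j≤k, 1≤i≤K} be independent standard Gaussians, independent of N; set F := P(N) and ♯^k[F] := Σ_{i_1,…,i_k=1}^K ∂_{i_1}⋯∂_{i_k} P(N) · G_{1,i_1} ⋯ G_{k,i_k}, a polynomial random variable in the K + kK Gaussian coordinates (N, G). Then E[ Γ[F,F]^{−q} ] ≤ C · E[ Γ[♯^kF, ♯^kF]^{−q'} ], where Γ[F,F] := Σ_{i=1}^K (∂_i P(N))² and Γ[♯^kF, ♯^kF] is the sum of the squared partial derivatives of ♯^k[F] with respect to all K + kK Gaussian coordinates. -/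
open MeasureTheory ProbabilityTheory MvPolynomial Filter Topology
open scoped ENNReal NNReal

/-- Iterated partial derivative of a multivariate polynomial along a tuple of directions. -/
noncomputable def pderivMulti {K k : ℕ} (i : Fin k → Fin K) (P : MvPolynomial (Fin K) ℝ) :
    MvPolynomial (Fin K) ℝ :=
  (List.ofFn i).foldr (fun idx Q => pderiv idx Q) P

/-- The `k`-times iterated sharp operator `♯^k[F]`, viewed as a polynomial in the original Gaussian
coordinates (`Sum.inl`) and the fresh independent Gaussian coordinates `G_{j,i}` (`Sum.inr`):
`♯^k[F] = ∑_{i₁,…,i_k} ∂_{i₁}⋯∂_{i_k} P · G_{1,i₁} ⋯ G_{k,i_k}`. -/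
noncomputable def sharpPoly {K : ℕ} (k : ℕ) (P : MvPolynomial (Fin K) ℝ) :
    MvPolynomial (Fin K ⊕ Fin k × Fin K) ℝ :=
  ∑ i : Fin k → Fin K,
    rename Sum.inl (pderivMulti i P) * ∏ j, MvPolynomial.X (Sum.inr (j, i j))

/-! ### Part 1: Gaussian measure, integrability of polynomials, integration by parts -/

section Basics

set_option linter.unusedSectionVars false

variable {ι : Type} [Fintype ι]

instance gaussPi_isProb : IsProbabilityMeasure (gaussPi ι) := by
  unfold gaussPi; infer_instance

lemma integrable_pow_gaussianReal (n : ℕ) : Integrable (fun x : ℝ => x ^ n) (gaussianReal 0 1) := by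
  have h := (memLp_id_gaussianReal' (μ := 0) (v := 1) (n : ℝ≥0∞) (by simp)).integrable_norm_pow'
  rw [← integrable_norm_iff (by fun_prop)]
  simpa using h

lemma integrable_eval_poly (P : MvPolynomial ι ℝ) :
    Integrable (fun x => eval x P) (gaussPi ι) := by
  induction P using MvPolynomial.induction_on' with
  | monomial u a =>
    have h : Integrable (fun x : ι → ℝ => ∏ i, (x i) ^ (u i)) (gaussPi ι) :=
      Integrable.fintype_prod (f := fun i t => t ^ (u i)) (fun i => integrable_pow_gaussianReal _)
    have := h.const_mul a
    refine this.congr (Eventually.of_forall fun x => ?_)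
    simp [eval_monomial, Finsupp.prod_fintype]
  | add p q hp hq =>
    simp only [map_add]
    exact hp.add hq

lemma continuous_eval_poly (P : MvPolynomial ι ℝ) : Continuous (fun x => eval x P) :=
  MvPolynomial.continuous_eval P

lemma hasDerivAt_eval_update [DecidableEq ι] (P : MvPolynomial ι ℝ) (x : ι → ℝ) (i : ι) (t : ℝ) :
    HasDerivAt (fun t => eval (Function.update x i t) P)
      (eval (Function.update x i t) (pderiv i P)) t := by
  induction P using MvPolynomial.induction_on with
  | C a => simpa using hasDerivAt_const t a
  | add p q hp hq => simp only [map_add]; exact hp.fun_add hq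
  | mul_X p j hp =>
    have hX : HasDerivAt (fun t => eval (Function.update x i t) (X j : MvPolynomial ι ℝ))
        (eval (Function.update x i t) (pderiv i (X j : MvPolynomial ι ℝ))) t := by
      by_cases h : j = i
      · subst h
        simpa using hasDerivAt_id' t
      · simpa [pderiv_X_of_ne h, h] using hasDerivAt_const t (x j)
    have := hp.fun_mul hX
    rw [pderiv_mul]
    simp only [map_add, map_mul] at this ⊢
    exact this

lemma measurePreserving_update [DecidableEq ι] (i : ι) :
    MeasurePreserving (fun z : (ι → ℝ) × ℝ => Function.update z.1 i z.2)
      ((gaussPi ι).prod (gaussianReal 0 1)) (gaussPi ι) := by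
  have hm : Measurable (fun z : (ι → ℝ) × ℝ => Function.update z.1 i z.2) := by
    rw [measurable_pi_iff]
    intro j
    by_cases h : j = i
    · subst h; simpa using measurable_snd
    · simp only [Function.update_of_ne h]; fun_prop
  refine ⟨hm, ?_⟩
  refine (Measure.pi_eq fun s hs => ?_).symm
  rw [Measure.map_apply hm (MeasurableSet.univ_pi hs)]
  have : (fun z : (ι → ℝ) × ℝ => Function.update z.1 i z.2) ⁻¹' Set.univ.pi s
      = (Set.univ.pi (Function.update s i Set.univ)) ×ˢ (s i) := by
    ext z
    simp only [Set.mem_preimage, Set.mem_pi, Set.mem_univ, true_implies, Set.mem_prod]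
    constructor
    · intro h
      refine ⟨fun j => ?_, by simpa using h i⟩
      by_cases hj : j = i
      · subst hj; simp
      · simpa [hj] using h j
    · rintro ⟨h1, h2⟩ j
      by_cases hj : j = i
      · subst hj; simpa using h2
      · simpa [hj] using h1 j
  rw [this, Measure.prod_prod, gaussPi, Measure.pi_pi]
  rw [← Finset.mul_prod_erase Finset.univ _ (Finset.mem_univ i),
    ← Finset.mul_prod_erase Finset.univ (fun j => (gaussianReal 0 1) (s j)) (Finset.mem_univ i)]
  have h2 : ∏ x ∈ Finset.univ.erase i, (gaussianReal 0 1) (Function.update s i Set.univ x)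
      = ∏ x ∈ Finset.univ.erase i, (gaussianReal 0 1) (s x) := by
    refine Finset.prod_congr rfl fun j hj => ?_
    rw [Function.update_of_ne (Finset.ne_of_mem_erase hj)]
  rw [h2]
  simp [mul_comm]

lemma gaussianPDF_hasDerivAt (t : ℝ) :
    HasDerivAt (gaussianPDFReal 0 1) (- t * gaussianPDFReal 0 1 t) t := by
  have h : gaussianPDFReal 0 1 = fun x => (√(2 * Real.pi))⁻¹ * Real.exp (- x ^ 2 / 2) := by
    ext x; simp [gaussianPDFReal_def]
  rw [h]
  have h1 : HasDerivAt (fun x : ℝ => - x ^ 2 / 2) (-t) t := by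
    exact ((((hasDerivAt_id' t).fun_pow 2).fun_neg).div_const 2).congr_deriv (by simp; ring)
  exact ((h1.exp).const_mul ((√(2 * Real.pi))⁻¹)).congr_deriv (by ring)

lemma integrable_gaussianReal_iff (f : ℝ → ℝ) :
    Integrable f (gaussianReal 0 1) ↔ Integrable (fun t => gaussianPDFReal 0 1 t * f t) := by
  rw [gaussianReal_of_var_ne_zero _ one_ne_zero]
  rw [integrable_withDensity_iff_integrable_smul₀' (by fun_prop)]
  · simp [toReal_gaussianPDF]
  · exact Eventually.of_forall fun x => gaussianPDF_lt_top

lemma ibp_one (f f' : ℝ → ℝ) (hd : ∀ t, HasDerivAt f (f' t) t)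
    (hf : Integrable f (gaussianReal 0 1)) (hf' : Integrable f' (gaussianReal 0 1))
    (hxf : Integrable (fun t => t * f t) (gaussianReal 0 1)) :
    ∫ t, f' t ∂(gaussianReal 0 1) = ∫ t, t * f t ∂(gaussianReal 0 1) := by
  rw [integral_gaussianReal_eq_integral_smul one_ne_zero,
    integral_gaussianReal_eq_integral_smul one_ne_zero]
  rw [integrable_gaussianReal_iff] at hf hf' hxf
  have h := integral_eq_zero_of_hasDerivAt_of_integrable
    (f := fun t => gaussianPDFReal 0 1 t * f t)
    (f' := fun t => gaussianPDFReal 0 1 t * f' t - gaussianPDFReal 0 1 t * (t * f t))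
    (fun t => by
      exact ((gaussianPDF_hasDerivAt t).fun_mul (hd t)).congr_deriv (by ring)) (hf'.sub hxf) hf
  rw [integral_sub hf' hxf, sub_eq_zero] at h
  simpa using h

lemma ibp [DecidableEq ι] (i : ι) (f f' : (ι → ℝ) → ℝ)
    (hd : ∀ x t, HasDerivAt (fun t => f (Function.update x i t)) (f' (Function.update x i t)) t)
    (hf : Integrable f (gaussPi ι)) (hf' : Integrable f' (gaussPi ι))
    (hxf : Integrable (fun x => x i * f x) (gaussPi ι)) :
    ∫ x, f' x ∂(gaussPi ι) = ∫ x, x i * f x ∂(gaussPi ι) := by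
  have mp := measurePreserving_update (ι := ι) i
  have key : ∀ g : (ι → ℝ) → ℝ, Integrable g (gaussPi ι) →
      Integrable (fun z : (ι → ℝ) × ℝ => g (Function.update z.1 i z.2))
        ((gaussPi ι).prod (gaussianReal 0 1)) := fun g hg => mp.integrable_comp_of_integrable hg
  have key2 : ∀ g : (ι → ℝ) → ℝ, Integrable g (gaussPi ι) →
      ∫ x, g x ∂(gaussPi ι) = ∫ x, ∫ t, g (Function.update x i t) ∂(gaussianReal 0 1)
        ∂(gaussPi ι) := by
    intro g hg
    have hg1 := hg.1
    rw [← integral_prod _ (key g hg)]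
    rw [← mp.map_eq] at hg1
    have h := integral_map mp.measurable.aemeasurable hg1
    rw [mp.map_eq] at h
    exact h
  rw [key2 _ hf', key2 _ hxf]
  refine integral_congr_ae ?_
  filter_upwards [(key f hf).prod_right_ae, (key f' hf').prod_right_ae,
    (key _ hxf).prod_right_ae] with x h1 h2 h3
  have := ibp_one _ _ (hd x) h1 h2 (by simpa using h3)
  simpa using this

end Basics

/-! ### Part 2: polynomial calculus for the Ornstein-Uhlenbeck operator -/

section Poly

set_option linter.unusedSectionVars false

variable {ι : Type} [Fintype ι]

/-- Gaussian expectation of a polynomial. -/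
noncomputable def EE (P : MvPolynomial ι ℝ) : ℝ := ∫ x, eval x P ∂gaussPi ι

/-- Bilinear carré du champ. -/
noncomputable def GG (P Q : MvPolynomial ι ℝ) : MvPolynomial ι ℝ := ∑ i, pderiv i P * pderiv i Q

/-- Ornstein-Uhlenbeck operator. -/
noncomputable def LL (P : MvPolynomial ι ℝ) : MvPolynomial ι ℝ :=
  ∑ i, (pderiv i (pderiv i P) - X i * pderiv i P)

lemma EE_add (P Q : MvPolynomial ι ℝ) : EE (P + Q) = EE P + EE Q := by
  simp only [EE, map_add]
  exact integral_add (integrable_eval_poly P) (integrable_eval_poly Q)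

lemma EE_Cmul (c : ℝ) (P : MvPolynomial ι ℝ) : EE (C c * P) = c * EE P := by
  simp only [EE, map_mul, eval_C]
  exact integral_const_mul _ _

lemma EE_neg (P : MvPolynomial ι ℝ) : EE (- P) = - EE P := by
  simp only [EE, map_neg]
  exact integral_neg _

lemma EE_sub (P Q : MvPolynomial ι ℝ) : EE (P - Q) = EE P - EE Q := by
  rw [sub_eq_add_neg, EE_add, EE_neg, sub_eq_add_neg]

lemma EE_C (c : ℝ) : EE (C c : MvPolynomial ι ℝ) = c := by
  simp [EE]

lemma EE_zero : EE (0 : MvPolynomial ι ℝ) = 0 := by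
  simp [EE]

lemma EE_sum {κ : Type} (s : Finset κ) (P : κ → MvPolynomial ι ℝ) :
    EE (∑ a ∈ s, P a) = ∑ a ∈ s, EE (P a) := by
  simp only [EE, map_sum]
  exact integral_finsetSum _ (fun a _ => integrable_eval_poly (P a))

lemma EE_mono {P Q : MvPolynomial ι ℝ} (h : ∀ x, eval x P ≤ eval x Q) : EE P ≤ EE Q :=
  integral_mono (integrable_eval_poly P) (integrable_eval_poly Q) h

lemma EE_nonneg {P : MvPolynomial ι ℝ} (h : ∀ x, 0 ≤ eval x P) : 0 ≤ EE P :=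
  integral_nonneg h

lemma EE_sq_nonneg (P : MvPolynomial ι ℝ) : 0 ≤ EE (P ^ 2) :=
  EE_nonneg fun x => by simpa using sq_nonneg _

lemma eval_GG_self_nonneg (P : MvPolynomial ι ℝ) (x : ι → ℝ) : 0 ≤ eval x (GG P P) := by
  simp only [GG, map_sum, map_mul]
  exact Finset.sum_nonneg fun i _ => mul_self_nonneg _

lemma sqField_eq (P : MvPolynomial ι ℝ) (x : ι → ℝ) : sqField P x = eval x (GG P P) := by
  simp [sqField, GG, sq]

lemma EE_ibp (i : ι) (P : MvPolynomial ι ℝ) : EE (pderiv i P) = EE (X i * P) := by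
  classical
  simp only [EE, map_mul, eval_X]
  refine ibp i _ _ (fun x t => hasDerivAt_eval_update P x i t) (integrable_eval_poly P)
    (integrable_eval_poly _) ?_
  refine (integrable_eval_poly (X i * P)).congr (Eventually.of_forall fun x => ?_)
  simp

lemma EE_mul_LL (P Q : MvPolynomial ι ℝ) : EE (P * LL Q) = - EE (GG P Q) := by
  simp only [LL, GG, Finset.mul_sum, EE_sum]
  rw [← Finset.sum_neg_distrib]
  refine Finset.sum_congr rfl fun i _ => ?_
  have h := EE_ibp i (P * pderiv i Q)
  rw [pderiv_mul, EE_add] at h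
  rw [mul_sub, EE_sub, show P * (X i * pderiv i Q) = X i * (P * pderiv i Q) by ring]
  linarith

lemma GG_comm (P Q : MvPolynomial ι ℝ) : GG P Q = GG Q P := by
  simp [GG, mul_comm]

lemma pderiv_comm' (i j : ι) (P : MvPolynomial ι ℝ) :
    pderiv i (pderiv j P) = pderiv j (pderiv i P) := by
  classical
  induction P using MvPolynomial.induction_on with
  | C a => simp
  | add p q hp hq => simp [hp, hq]
  | mul_X p n hp =>
    have h : ∀ a b : ι, pderiv a (pderiv b (X n : MvPolynomial ι ℝ)) = 0 := by
      intro a b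
      rw [pderiv_X]
      by_cases h : n = b
      · subst h; simp
      · simp [h]
    simp only [pderiv_mul, map_add, hp, h]
    ring

lemma pderiv_LL (i : ι) (P : MvPolynomial ι ℝ) : pderiv i (LL P) = LL (pderiv i P) - pderiv i P := by
  classical
  have h : ∀ j, pderiv i (pderiv j (pderiv j P) - X j * pderiv j P)
      = (pderiv j (pderiv j (pderiv i P)) - X j * pderiv j (pderiv i P))
        - (if j = i then pderiv i P else 0) := by
    intro j
    rw [map_sub, pderiv_mul, pderiv_comm' i j, pderiv_comm' i j P]
    by_cases h : j = i
    · subst h; simp; ring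
    · rw [pderiv_X_of_ne h]; simp [h]
  simp only [LL, map_sum]
  rw [Finset.sum_congr rfl fun j _ => h j, Finset.sum_sub_distrib]
  simp

lemma LL_add (P Q : MvPolynomial ι ℝ) : LL (P + Q) = LL P + LL Q := by
  simp only [LL, map_add, ← Finset.sum_add_distrib]
  refine Finset.sum_congr rfl fun i _ => by ring

lemma LL_Cmul (c : ℝ) (P : MvPolynomial ι ℝ) : LL (C c * P) = C c * LL P := by
  simp only [LL, pderiv_C_mul, Finset.mul_sum]
  refine Finset.sum_congr rfl fun i _ => by ring

lemma LL_neg (P : MvPolynomial ι ℝ) : LL (- P) = - LL P := by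
  have := LL_Cmul (-1) P
  simpa using this

lemma EE_LL_sq (P : MvPolynomial ι ℝ) :
    EE (LL P ^ 2) = ∑ i, EE (GG (pderiv i P) (pderiv i P)) + EE (GG P P) := by
  have h1 : ∀ i, EE (GG (pderiv i P) (pderiv i P))
      = - EE (pderiv i P * pderiv i (LL P)) - EE (pderiv i P * pderiv i P) := by
    intro i
    have := EE_mul_LL (pderiv i P) (pderiv i P)
    rw [pderiv_LL, mul_sub, EE_sub]
    linarith
  have h2 := EE_mul_LL (LL P) P
  rw [Finset.sum_congr rfl fun i _ => h1 i, Finset.sum_sub_distrib, Finset.sum_neg_distrib,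
    ← EE_sum, ← EE_sum, sq, h2, GG_comm]
  simp only [GG]
  ring

lemma totalDegree_pderiv_le' (i : ι) (P : MvPolynomial ι ℝ) {d : ℕ} (h : P.totalDegree ≤ d + 1) :
    (pderiv i P).totalDegree ≤ d := by
  classical
  refine Finset.sup_le fun u hu => ?_
  rw [mem_support_iff, coeff_pderiv] at hu
  have h1 : u + Finsupp.single i 1 ∈ P.support := by
    rw [mem_support_iff]
    exact left_ne_zero_of_mul hu
  have h2 := (le_totalDegree h1).trans h
  rw [Finsupp.sum_fintype _ _ (fun _ => rfl)] at h2 ⊢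
  simp only [Finsupp.add_apply, Finset.sum_add_distrib] at h2
  have h3 : ∑ x, (Finsupp.single i 1 : ι →₀ ℕ) x = 1 := by
    simp [Finsupp.single_apply]
  omega

lemma totalDegree_pderiv_zero (i : ι) (P : MvPolynomial ι ℝ) (h : P.totalDegree = 0) :
    pderiv i P = 0 := by
  rw [totalDegree_eq_zero_iff_eq_C] at h
  rw [h]; simp

lemma totalDegree_pderiv_le'' (i : ι) (P : MvPolynomial ι ℝ) {d : ℕ} (h : P.totalDegree ≤ d) :
    (pderiv i P).totalDegree ≤ d := by
  exact totalDegree_pderiv_le' i P (by omega)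

/-- Cauchy-Schwarz for polynomials. -/
lemma EE_cs (P Q : MvPolynomial ι ℝ) : EE (P * Q) ^ 2 ≤ EE (P ^ 2) * EE (Q ^ 2) := by
  have h : ∀ t : ℝ, 0 ≤ EE (P ^ 2) * (t * t) + (2 * EE (P * Q)) * t + EE (Q ^ 2) := by
    intro t
    have := EE_sq_nonneg (C t * P + Q)
    rw [show (C t * P + Q) ^ 2 = C (t * t) * P ^ 2 + C (2 * t) * (P * Q) + Q ^ 2 by
      simp only [map_mul, map_ofNat]; ring, EE_add, EE_add, EE_Cmul, EE_Cmul] at this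
    linarith
  have := discrim_le_zero h
  rw [discrim] at this
  nlinarith

/-- Upper spectral bounds, dimension free. -/
lemma spectral_upper (d : ℕ) : ∀ P : MvPolynomial ι ℝ, P.totalDegree ≤ d →
    EE (LL P ^ 2) ≤ (d : ℝ) ^ 2 * EE (P ^ 2) ∧ EE (GG P P) ≤ d * EE (P ^ 2) := by
  induction d with
  | zero =>
    intro P hP
    have h0 : ∀ i, pderiv i P = 0 := fun i => totalDegree_pderiv_zero i P (by omega)
    simp [LL, GG, h0, EE_zero]
  | succ d ih =>
    intro P hP
    have h1 : EE (LL P ^ 2) ≤ (d + 1 : ℝ) * EE (GG P P) := by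
      rw [EE_LL_sq]
      have : ∑ i, EE (GG (pderiv i P) (pderiv i P)) ≤ ∑ i, d * EE (pderiv i P ^ 2) :=
        Finset.sum_le_sum fun i _ => (ih _ (totalDegree_pderiv_le' i P hP)).2
      rw [← Finset.mul_sum, ← EE_sum Finset.univ fun i => pderiv i P ^ 2] at this
      have h3 : ∑ i, pderiv i P ^ 2 = GG P P := by simp [GG, sq]
      rw [h3] at this
      linarith
    have h2 : EE (GG P P) ^ 2 ≤ EE (P ^ 2) * EE (LL P ^ 2) := by
      have := EE_cs P (LL P)
      rw [EE_mul_LL] at this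
      simpa using this
    have g0 : 0 ≤ EE (GG P P) := EE_nonneg (eval_GG_self_nonneg P)
    have p0 := EE_sq_nonneg P
    have l0 := EE_sq_nonneg (LL P)
    have h3 : EE (GG P P) ≤ (d + 1 : ℝ) * EE (P ^ 2) := by
      rcases g0.eq_or_lt with h | h
      · rw [← h]; positivity
      · have : EE (GG P P) * EE (GG P P) ≤ ((d + 1 : ℝ) * EE (P ^ 2)) * EE (GG P P) := by
          nlinarith [mul_le_mul_of_nonneg_left h1 p0]
        exact le_of_mul_le_mul_right this h
    push_cast
    refine ⟨?_, h3⟩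
    have : (0 : ℝ) ≤ d + 1 := by positivity
    nlinarith [mul_le_mul_of_nonneg_left h3 this]

lemma exists_LL_inv (n : ℕ) : ∀ P : MvPolynomial ι ℝ, P.totalDegree ≤ n →
    ∃ (c : ℝ) (Q : MvPolynomial ι ℝ), P = C c + LL Q := by
  induction n with
  | zero =>
    intro P hP
    refine ⟨coeff 0 P, 0, ?_⟩
    have := totalDegree_eq_zero_iff_eq_C.mp (Nat.le_zero.mp hP)
    simpa [LL] using this
  | succ n ih =>
    have hmon : ∀ (u : ι →₀ ℕ) (a : ℝ), (monomial u a : MvPolynomial ι ℝ).totalDegree ≤ n + 1 →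
        ∃ (c : ℝ) (Q : MvPolynomial ι ℝ), monomial u a = C c + LL Q := by
      intro u a hu
      have hL : LL (monomial u a) = (∑ i, pderiv i (pderiv i (monomial u a)))
          - C ((∑ i, u i : ℕ) : ℝ) * monomial u a := by
        simp only [LL, Finset.sum_sub_distrib, X_mul_pderiv_monomial, ← Finset.sum_smul]
        simp
      by_cases h0 : (∑ i, u i) = 0
      · refine ⟨a, 0, ?_⟩
        have : u = 0 := by
          ext i
          exact (Finset.sum_eq_zero_iff.mp h0) i (Finset.mem_univ i)
        subst this
        simp [LL]
      · obtain ⟨c, Q, hQ⟩ := ih (∑ i, pderiv i (pderiv i (monomial u a)))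
          (totalDegree_finsetSum_le fun i _ =>
            totalDegree_pderiv_le'' i _ (totalDegree_pderiv_le' i _ hu))
        set N : ℝ := ((∑ i, u i : ℕ) : ℝ) with hN
        have hN0 : N ≠ 0 := by rw [hN]; exact_mod_cast h0
        refine ⟨N⁻¹ * c, C N⁻¹ * (Q - monomial u a), ?_⟩
        have e1 : C N * monomial u a = C c + LL Q - LL (monomial u a) := by
          rw [hL, hQ]; ring
        rw [LL_Cmul, sub_eq_add_neg, LL_add, LL_neg, map_mul]
        calc monomial u a = C N⁻¹ * (C N * monomial u a) := by
              rw [← mul_assoc, ← map_mul, inv_mul_cancel₀ hN0]; simp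
          _ = _ := by rw [e1]; ring
    intro P hP
    have hs : ∀ s : Finset (ι →₀ ℕ), s ⊆ P.support →
        ∃ (c : ℝ) (Q : MvPolynomial ι ℝ), ∑ v ∈ s, monomial v (coeff v P) = C c + LL Q := by
      classical
      intro s
      induction s using Finset.induction_on with
      | empty => exact fun _ => ⟨0, 0, by simp [LL]⟩
      | insert v s hv ih2 =>
        intro hsub
        obtain ⟨c, Q, h⟩ := ih2 (fun x hx => hsub (Finset.mem_insert_of_mem hx))
        obtain ⟨c', Q', h'⟩ := hmon v (coeff v P) (by
          refine (totalDegree_monomial_le _ _).trans ?_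
          exact (le_totalDegree (hsub (Finset.mem_insert_self v s))).trans hP)
        refine ⟨c' + c, Q' + Q, ?_⟩
        rw [Finset.sum_insert hv, h, h', LL_add, map_add]; ring
    obtain ⟨c, Q, h⟩ := hs P.support subset_rfl
    rw [support_sum_monomial_coeff] at h
    exact ⟨c, Q, h⟩

lemma eval_GG_cs (P Q : MvPolynomial ι ℝ) (x : ι → ℝ) :
    (eval x (GG P Q)) ^ 2 ≤ eval x (GG P P) * eval x (GG Q Q) := by
  simp only [GG, map_sum, map_mul, ← sq, map_pow]
  exact Finset.sum_mul_sq_le_sq_mul_sq Finset.univ (fun i => eval x (pderiv i P))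
    (fun i => eval x (pderiv i Q))

lemma poincare (P : MvPolynomial ι ℝ) : EE (P ^ 2) ≤ EE P ^ 2 + EE (GG P P) := by
  obtain ⟨c, Q, hQ⟩ := exists_LL_inv _ P le_rfl
  have hEL : ∀ R : MvPolynomial ι ℝ, EE (LL R) = 0 := by
    intro R
    have := EE_mul_LL 1 R
    simpa [GG, EE_zero] using this
  have hc : EE P = c := by rw [hQ, EE_add, EE_C, hEL]; ring
  have hvar : EE (P ^ 2) = c ^ 2 + EE (LL Q ^ 2) := by
    rw [hQ, show (C c + LL Q) ^ 2 = C (c ^ 2) + C (2 * c) * LL Q + LL Q ^ 2 by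
      simp only [map_mul, map_pow, map_ofNat]; ring, EE_add, EE_add, EE_C, EE_Cmul, hEL]
    ring
  have hGP : GG P P = GG (LL Q) (LL Q) := by
    simp [GG, hQ]
  -- `E (LL Q)^2 = - E Γ(LL Q, Q)`
  have h1 : EE (LL Q ^ 2) = - EE (GG (LL Q) Q) := by rw [sq, EE_mul_LL]
  have h2 : EE (GG Q Q) ≤ EE (LL Q ^ 2) := by
    rw [EE_LL_sq]
    have : 0 ≤ ∑ i, EE (GG (pderiv i Q) (pderiv i Q)) :=
      Finset.sum_nonneg fun i _ => EE_nonneg (eval_GG_self_nonneg _)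
    linarith
  have h3 : - EE (GG (LL Q) Q) ≤ EE (GG (LL Q) (LL Q)) / 2 + EE (GG Q Q) / 2 := by
    have : 0 ≤ EE (GG (LL Q + Q) (LL Q + Q)) := EE_nonneg (eval_GG_self_nonneg _)
    have e : GG (LL Q + Q) (LL Q + Q) = GG (LL Q) (LL Q) + C 2 * GG (LL Q) Q + GG Q Q := by
      simp only [GG, map_add, Finset.mul_sum, ← Finset.sum_add_distrib]
      refine Finset.sum_congr rfl fun i _ => ?_
      simp only [map_ofNat]; ring
    rw [e, EE_add, EE_add, EE_Cmul] at this
    linarith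
  rw [hvar, hc, hGP]
  linarith

end Poly

/-- Dimension free fourth moment bound for vector valued Gaussian polynomials. -/
lemma fourth_moment (d : ℕ) : ∃ c : ℝ, 0 ≤ c ∧ ∀ (ι κ : Type) [Fintype ι] [Fintype κ]
    (A : κ → MvPolynomial ι ℝ), (∀ a, (A a).totalDegree ≤ d) →
    EE ((∑ a, A a ^ 2) ^ 2) ≤ c * EE (∑ a, A a ^ 2) ^ 2 := by
  induction d with
  | zero =>
    refine ⟨1, zero_le_one, fun ι κ _ _ A hA => ?_⟩
    have h : ∀ a, A a = C (coeff 0 (A a)) := fun a =>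
      totalDegree_eq_zero_iff_eq_C.mp (Nat.le_zero.mp (hA a))
    have : ∑ a, A a ^ 2 = C (∑ a, (coeff 0 (A a)) ^ 2) := by
      rw [map_sum]
      refine Finset.sum_congr rfl fun a _ => ?_
      rw [map_pow, ← h a]
    rw [this, ← map_pow, EE_C, EE_C, one_mul]
  | succ d ih =>
    obtain ⟨c, hc, ih⟩ := ih
    refine ⟨2 + 16 * c * (d + 1) ^ 2, by positivity, fun ι κ _ _ A hA => ?_⟩
    set S : MvPolynomial ι ℝ := ∑ a, A a ^ 2 with hS
    set T : MvPolynomial ι ℝ := ∑ z : κ × ι, (pderiv z.2 (A z.1)) ^ 2 with hT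
    have hT4 : EE (T ^ 2) ≤ c * EE T ^ 2 :=
      ih ι (κ × ι) (fun z => pderiv z.2 (A z.1)) fun z => totalDegree_pderiv_le' _ _ (hA z.1)
    have hTG : T = ∑ a, GG (A a) (A a) := by
      rw [hT, Fintype.sum_prod_type]; simp [GG, sq]
    have hTS : EE T ≤ (d + 1 : ℝ) * EE S := by
      rw [hTG, hS, EE_sum, EE_sum, Finset.mul_sum]
      refine Finset.sum_le_sum fun a _ => ?_
      have := (spectral_upper (d + 1) (A a) (hA a)).2
      push_cast at this; exact this
    have hT0 : 0 ≤ EE T := EE_nonneg fun x => by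
      simp only [hT, map_sum, map_pow]; exact Finset.sum_nonneg fun _ _ => sq_nonneg _
    have hp := poincare S
    have hGS : EE (GG S S) ≤ EE (C (1/2) * S ^ 2 + C 8 * T ^ 2) := by
      refine EE_mono fun x => ?_
      have e1 : ∀ i, eval x (pderiv i S) = 2 * ∑ a, eval x (A a) * eval x (pderiv i (A a)) := by
        intro i
        rw [hS, map_sum, map_sum, Finset.mul_sum]
        refine Finset.sum_congr rfl fun a _ => ?_
        rw [pderiv_pow]; simp; ring
      have e2 : eval x (GG S S) ≤ 4 * (eval x S * eval x T) := by
        have : eval x T = ∑ i, ∑ a, (eval x (pderiv i (A a))) ^ 2 := by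
          rw [hT, Fintype.sum_prod_type_right]; simp
        rw [this, Finset.mul_sum, Finset.mul_sum]
        simp only [GG, map_sum, map_mul, e1]
        refine Finset.sum_le_sum fun i _ => ?_
        have := Finset.sum_mul_sq_le_sq_mul_sq Finset.univ (fun a => eval x (A a))
          (fun a => eval x (pderiv i (A a)))
        have e3 : eval x S = ∑ a, (eval x (A a)) ^ 2 := by rw [hS]; simp
        rw [e3]
        nlinarith
      simp only [map_add, map_mul, eval_C, map_pow]
      nlinarith [sq_nonneg (eval x S - 4 * eval x T)]
    rw [EE_add, EE_Cmul, EE_Cmul] at hGS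
    have hT2 : EE T ^ 2 ≤ ((d + 1 : ℝ) * EE S) ^ 2 := pow_le_pow_left₀ hT0 hTS 2
    have := mul_le_mul_of_nonneg_left hT2 hc
    nlinarith

/-! ### Part 3: dimension free norm inequalities -/

section Norms

set_option linter.unusedSectionVars false

variable {ι : Type} [Fintype ι]

/-- The `L²` norm of a polynomial. -/
noncomputable def nrm (P : MvPolynomial ι ℝ) : ℝ := √(EE (P ^ 2))

lemma nrm_nonneg (P : MvPolynomial ι ℝ) : 0 ≤ nrm P := Real.sqrt_nonneg _

lemma nrm_sq (P : MvPolynomial ι ℝ) : nrm P ^ 2 = EE (P ^ 2) := Real.sq_sqrt (EE_sq_nonneg P)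

lemma EE_mul_le_nrm (P Q : MvPolynomial ι ℝ) : EE (P * Q) ≤ nrm P * nrm Q := by
  refine Real.le_sqrt_of_sq_le (EE_cs P Q) |>.trans_eq ?_
  rw [Real.sqrt_mul (EE_sq_nonneg P)]; rfl

lemma nrm_add (P Q : MvPolynomial ι ℝ) : nrm (P + Q) ≤ nrm P + nrm Q := by
  refine Real.sqrt_le_iff.mpr ⟨add_nonneg (nrm_nonneg _) (nrm_nonneg _), ?_⟩
  have := EE_mul_le_nrm P Q
  rw [show (P + Q) ^ 2 = P ^ 2 + C 2 * (P * Q) + Q ^ 2 by simp only [map_ofNat]; ring, EE_add,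
    EE_add, EE_Cmul]
  nlinarith [nrm_sq P, nrm_sq Q]

lemma nrm_le_of_sq {P : MvPolynomial ι ℝ} {b : ℝ} (hb : 0 ≤ b) (h : EE (P ^ 2) ≤ b ^ 2) :
    nrm P ≤ b := Real.sqrt_le_iff.mpr ⟨hb, h⟩

lemma nrm_LL (d : ℕ) (P : MvPolynomial ι ℝ) (hP : P.totalDegree ≤ d) :
    nrm (LL P) ≤ d * nrm P := by
  refine nrm_le_of_sq (mul_nonneg (by positivity) (nrm_nonneg _)) ?_
  rw [mul_pow, nrm_sq]
  exact (spectral_upper d P hP).1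

lemma deg_GG {P Q : MvPolynomial ι ℝ} {d e : ℕ} (hP : P.totalDegree ≤ d) (hQ : Q.totalDegree ≤ e) :
    (GG P Q).totalDegree ≤ d + e :=
  totalDegree_finsetSum_le fun i _ => (totalDegree_mul _ _).trans
    (add_le_add (totalDegree_pderiv_le'' i P hP) (totalDegree_pderiv_le'' i Q hQ))

lemma deg_LL {P : MvPolynomial ι ℝ} {d : ℕ} (hP : P.totalDegree ≤ d) :
    (LL P).totalDegree ≤ d + 1 := by
  refine totalDegree_finsetSum_le fun i _ => ?_
  refine (totalDegree_sub _ _).trans (max_le ?_ ?_)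
  · exact (totalDegree_pderiv_le'' i _ (totalDegree_pderiv_le'' i P hP)).trans (by omega)
  · refine (totalDegree_mul _ _).trans ?_
    rw [totalDegree_X]
    have := totalDegree_pderiv_le'' i P hP
    omega

end Norms

lemma sq_le_helper {a b c x y : ℝ} (h : a ^ 2 ≤ x * y) (hx : x ≤ c * b ^ 2) {b' : ℝ}
    (hy : y ≤ c * b' ^ 2) (hc : 0 ≤ c) (hb : 0 ≤ b) (hb' : 0 ≤ b') (hy0 : 0 ≤ y) :
    a ≤ c * (b * b') := by
  refine abs_le_of_sq_le_sq' ?_ (by positivity) |>.2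
  calc a ^ 2 ≤ x * y := h
    _ ≤ (c * b ^ 2) * (c * b' ^ 2) := mul_le_mul hx hy hy0 (by positivity)
    _ = _ := by ring

lemma prod_bound (d : ℕ) : ∃ c : ℝ, 0 ≤ c ∧ ∀ (ι : Type) [Fintype ι]
    (P Q : MvPolynomial ι ℝ), P.totalDegree ≤ d → Q.totalDegree ≤ d →
    nrm (P * Q) ≤ c * (nrm P * nrm Q) := by
  obtain ⟨c, hc, h⟩ := fourth_moment d
  refine ⟨√c, Real.sqrt_nonneg _, fun ι _ P Q hP hQ => ?_⟩
  have h4 : ∀ R : MvPolynomial ι ℝ, R.totalDegree ≤ d → EE ((R ^ 2) ^ 2) ≤ c * EE (R ^ 2) ^ 2 := by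
    intro R hR
    simpa using h ι Unit (fun _ => R) (fun _ => hR)
  have n0 := nrm_nonneg P
  have n1 := nrm_nonneg Q
  refine nrm_le_of_sq (by positivity) ?_
  rw [mul_pow, mul_pow, mul_pow, Real.sq_sqrt hc, nrm_sq, nrm_sq]
  exact sq_le_helper (EE_cs (P ^ 2) (Q ^ 2)) (h4 P hP) (h4 Q hQ) hc (EE_sq_nonneg P)
    (EE_sq_nonneg Q) (EE_sq_nonneg _)

lemma GG_bound (d : ℕ) : ∃ c : ℝ, 0 ≤ c ∧ ∀ (ι : Type) [Fintype ι]
    (P Q : MvPolynomial ι ℝ), P.totalDegree ≤ d → Q.totalDegree ≤ d →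
    nrm (GG P Q) ≤ c * (nrm P * nrm Q) := by
  obtain ⟨c, hc, h⟩ := fourth_moment d
  refine ⟨√c * d, by positivity, fun ι _ P Q hP hQ => ?_⟩
  have h4 : ∀ R : MvPolynomial ι ℝ, R.totalDegree ≤ d →
      EE (GG R R ^ 2) ≤ c * EE (GG R R) ^ 2 := by
    intro R hR
    have := h ι ι (fun i => pderiv i R) (fun i => totalDegree_pderiv_le'' i R hR)
    have e : ∑ i, pderiv i R ^ 2 = GG R R := by simp [GG, sq]
    rwa [e] at this
  have n0 := nrm_nonneg P
  have n1 := nrm_nonneg Q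
  refine nrm_le_of_sq (by positivity) ?_
  have gn : ∀ R : MvPolynomial ι ℝ, 0 ≤ EE (GG R R) := fun R => EE_nonneg (eval_GG_self_nonneg R)
  have h1 : EE (GG P Q ^ 2) ≤ EE (GG P P * GG Q Q) := EE_mono fun x => by
    simpa using eval_GG_cs P Q x
  have h2 : EE (GG P P * GG Q Q) ≤ c * (EE (GG P P) * EE (GG Q Q)) :=
    sq_le_helper (EE_cs (GG P P) (GG Q Q)) (h4 P hP) (h4 Q hQ) hc (gn P) (gn Q)
      (EE_sq_nonneg _)
  have h3 := mul_le_mul (spectral_upper d P hP).2 (spectral_upper d Q hQ).2 (gn Q)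
    (mul_nonneg (by positivity) (EE_sq_nonneg P))
  rw [← nrm_sq, ← nrm_sq] at h3
  calc EE (GG P Q ^ 2) ≤ c * (EE (GG P P) * EE (GG Q Q)) := h1.trans h2
    _ ≤ c * (d * nrm P ^ 2 * (d * nrm Q ^ 2)) := mul_le_mul_of_nonneg_left h3 hc
    _ = (√c * d * (nrm P * nrm Q)) ^ 2 := by
      rw [mul_pow, mul_pow, Real.sq_sqrt hc]; ring

/-! ### Part 4: oscillatory estimate -/

section Osc

set_option linter.unusedSectionVars false

variable {ι : Type} [Fintype ι]

/-- Regularised inverse of the carré du champ. -/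
noncomputable def vv (ε : ℝ) (F : MvPolynomial ι ℝ) (x : ι → ℝ) : ℝ := ε / (eval x (GG F F) + ε)

/-- The basic oscillatory integrand. -/
noncomputable def osc (ε ξ : ℝ) (F : MvPolynomial ι ℝ) (θ : ℝ) (p : MvPolynomial ι ℝ) (j : ℕ)
    (x : ι → ℝ) : ℝ := Real.cos (ξ * eval x F + θ) * eval x p * vv ε F x ^ j

/-- The basic oscillatory integral. -/
noncomputable def II (ε ξ : ℝ) (F : MvPolynomial ι ℝ) (θ : ℝ) (p : MvPolynomial ι ℝ) (j : ℕ) : ℝ :=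
  ∫ x, osc ε ξ F θ p j x ∂gaussPi ι

lemma vv_den_pos {ε : ℝ} (hε : 0 < ε) (F : MvPolynomial ι ℝ) (x : ι → ℝ) :
    0 < eval x (GG F F) + ε := add_pos_of_nonneg_of_pos (eval_GG_self_nonneg F x) hε

lemma vv_pos {ε : ℝ} (hε : 0 < ε) (F : MvPolynomial ι ℝ) (x : ι → ℝ) : 0 < vv ε F x :=
  div_pos hε (vv_den_pos hε F x)

lemma vv_le_one {ε : ℝ} (hε : 0 < ε) (F : MvPolynomial ι ℝ) (x : ι → ℝ) : vv ε F x ≤ 1 := by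
  rw [vv, div_le_one (vv_den_pos hε F x)]
  linarith [eval_GG_self_nonneg F x]

lemma continuous_vv {ε : ℝ} (hε : 0 < ε) (F : MvPolynomial ι ℝ) : Continuous (vv ε F) :=
  continuous_const.div ((continuous_eval_poly _).add continuous_const)
    fun x => (vv_den_pos hε F x).ne'

lemma continuous_osc {ε : ℝ} (hε : 0 < ε) (ξ : ℝ) (F : MvPolynomial ι ℝ) (θ : ℝ)
    (p : MvPolynomial ι ℝ) (j : ℕ) : Continuous (osc ε ξ F θ p j) := by
  have h1 := continuous_vv hε F
  have h2 := continuous_eval_poly F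
  have h3 := continuous_eval_poly p
  unfold osc
  fun_prop

lemma abs_osc_le {ε : ℝ} (hε : 0 < ε) (ξ : ℝ) (F : MvPolynomial ι ℝ) (θ : ℝ)
    (p : MvPolynomial ι ℝ) (j : ℕ) (x : ι → ℝ) : |osc ε ξ F θ p j x| ≤ |eval x p| := by
  rw [osc, abs_mul, abs_mul, abs_pow, abs_of_pos (vv_pos hε F x)]
  have h1 := Real.abs_cos_le_one (ξ * eval x F + θ)
  have h2 : vv ε F x ^ j ≤ 1 := pow_le_one₀ (vv_pos hε F x).le (vv_le_one hε F x)
  calc _ ≤ 1 * |eval x p| * 1 := by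
        have := (pow_pos (vv_pos hε F x) j).le
        gcongr
    _ = _ := by ring

lemma integrable_osc {ε : ℝ} (hε : 0 < ε) (ξ : ℝ) (F : MvPolynomial ι ℝ) (θ : ℝ)
    (p : MvPolynomial ι ℝ) (j : ℕ) : Integrable (osc ε ξ F θ p j) (gaussPi ι) :=
  (integrable_eval_poly p).mono (continuous_osc hε ξ F θ p j).aestronglyMeasurable
    (Eventually.of_forall fun x => by simpa using abs_osc_le hε ξ F θ p j x)

lemma II_add {ε : ℝ} (hε : 0 < ε) (ξ : ℝ) (F : MvPolynomial ι ℝ) (θ : ℝ)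
    (p p' : MvPolynomial ι ℝ) (j : ℕ) :
    II ε ξ F θ (p + p') j = II ε ξ F θ p j + II ε ξ F θ p' j := by
  rw [II, II, II, ← integral_add (integrable_osc hε _ _ _ _ _) (integrable_osc hε _ _ _ _ _)]
  refine integral_congr_ae (Eventually.of_forall fun x => ?_)
  simp only [osc, map_add]; ring

lemma II_neg (ε ξ : ℝ) (F : MvPolynomial ι ℝ) (θ : ℝ) (p : MvPolynomial ι ℝ) (j : ℕ) :
    II ε ξ F θ (-p) j = - II ε ξ F θ p j := by
  rw [II, II, ← integral_neg]
  refine integral_congr_ae (Eventually.of_forall fun x => ?_)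
  simp only [osc, map_neg]; ring

lemma II_sum {ε : ℝ} (hε : 0 < ε) (ξ : ℝ) (F : MvPolynomial ι ℝ) (θ : ℝ)
    (p : ι → MvPolynomial ι ℝ) (j : ℕ) :
    II ε ξ F θ (∑ i, p i) j = ∑ i, II ε ξ F θ (p i) j := by
  simp only [II]
  rw [← integral_finsetSum _ fun i _ => integrable_osc hε _ _ _ _ _]
  refine integral_congr_ae (Eventually.of_forall fun x => ?_)
  simp only [osc, map_sum, Finset.mul_sum, Finset.sum_mul]

lemma II_split {ε : ℝ} (hε : 0 < ε) (ξ : ℝ) (F : MvPolynomial ι ℝ) (θ : ℝ)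
    (p : MvPolynomial ι ℝ) (j : ℕ) :
    II ε ξ F θ p j = II ε ξ F θ p (j + 1) + ε⁻¹ * II ε ξ F θ (GG F F * p) (j + 1) := by
  simp only [II]
  rw [← integral_const_mul, ← integral_add (integrable_osc hε _ _ _ _ _)
    ((integrable_osc hε _ _ _ _ _).const_mul _)]
  refine integral_congr_ae (Eventually.of_forall fun x => ?_)
  have hd := (vv_den_pos hε F x).ne'
  have key : vv ε F x * (1 + ε⁻¹ * eval x (GG F F)) = 1 := by
    rw [vv]; field_simp; ring
  simp only [osc, map_mul]
  calc _ = Real.cos (ξ * eval x F + θ) * eval x p * vv ε F x ^ j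
        * (vv ε F x * (1 + ε⁻¹ * eval x (GG F F))) := by rw [key, mul_one]
    _ = _ := by ring

lemma hasDerivAt_vv [DecidableEq ι] {ε : ℝ} (hε : 0 < ε) (F : MvPolynomial ι ℝ) (x : ι → ℝ) (i : ι)
    (t : ℝ) :
    HasDerivAt (fun t => vv ε F (Function.update x i t))
      (-(ε⁻¹ * vv ε F (Function.update x i t) ^ 2
        * eval (Function.update x i t) (pderiv i (GG F F)))) t := by
  have hd := (vv_den_pos hε F (Function.update x i t)).ne'
  have h1 := (hasDerivAt_eval_update (GG F F) x i t).add_const ε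
  refine ((hasDerivAt_const t ε).fun_div h1 hd).congr_deriv ?_
  rw [vv]; field_simp; ring

lemma hasDerivAt_osc [DecidableEq ι] {ε : ℝ} (hε : 0 < ε) (ξ : ℝ) (F : MvPolynomial ι ℝ) (θ : ℝ)
    (p : MvPolynomial ι ℝ) (j : ℕ) (x : ι → ℝ) (i : ι) (t : ℝ) :
    HasDerivAt (fun t => osc ε ξ F (θ - Real.pi / 2) p (j + 1) (Function.update x i t))
      (ξ * osc ε ξ F θ (pderiv i F * p) (j + 1) (Function.update x i t)
        + osc ε ξ F (θ - Real.pi / 2) (pderiv i p) (j + 1) (Function.update x i t)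
        - (j + 1) * ε⁻¹ * osc ε ξ F (θ - Real.pi / 2) (pderiv i (GG F F) * p) (j + 2)
          (Function.update x i t)) t := by
  have h1 := (((hasDerivAt_eval_update F x i t).const_mul ξ).add_const (θ - Real.pi / 2)).cos
  have h2 := hasDerivAt_eval_update p x i t
  have h3 := (hasDerivAt_vv hε F x i t).fun_pow (j + 1)
  refine ((h1.fun_mul h2).fun_mul h3).congr_deriv ?_
  have hs : ∀ y : ℝ, Real.sin (y + (θ - Real.pi / 2)) = - Real.cos (y + θ) := by
    intro y
    rw [← add_sub_assoc, Real.sin_sub_pi_div_two]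
  simp only [osc, map_mul, hs, Nat.add_sub_cancel, Nat.cast_add, Nat.cast_one]
  ring

lemma II_ibp {ε : ℝ} (hε : 0 < ε) (ξ : ℝ) (F : MvPolynomial ι ℝ) (θ : ℝ)
    (p : MvPolynomial ι ℝ) (j : ℕ) :
    ξ * II ε ξ F θ (GG F F * p) (j + 1)
      = - II ε ξ F (θ - Real.pi / 2) (LL F * p + GG F p) (j + 1)
        + (j + 1) * ε⁻¹ * II ε ξ F (θ - Real.pi / 2) (GG F (GG F F) * p) (j + 2) := by
  classical
  have hi : ∀ i : ι, ξ * II ε ξ F θ (pderiv i F * pderiv i F * p) (j + 1)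
      = - II ε ξ F (θ - Real.pi / 2) ((pderiv i (pderiv i F) - X i * pderiv i F) * p
          + pderiv i F * pderiv i p) (j + 1)
        + (j + 1) * ε⁻¹ * II ε ξ F (θ - Real.pi / 2)
          (pderiv i F * pderiv i (GG F F) * p) (j + 2) := by
    intro i
    have h := ibp i _ _ (fun x t => hasDerivAt_osc hε ξ F θ (pderiv i F * p) j x i t)
      (integrable_osc hε _ _ _ _ _)
      ((((integrable_osc hε _ _ _ _ _).const_mul _).add (integrable_osc hε _ _ _ _ _)).sub
        ((integrable_osc hε _ _ _ _ _).const_mul _))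
      ((integrable_osc hε ξ F (θ - Real.pi / 2) (X i * (pderiv i F * p)) (j + 1)).congr
        (Eventually.of_forall fun x => by simp only [osc, map_mul, eval_X]; ring))
    have e1 : ∫ x, x i * osc ε ξ F (θ - Real.pi / 2) (pderiv i F * p) (j + 1) x ∂gaussPi ι
        = II ε ξ F (θ - Real.pi / 2) (X i * (pderiv i F * p)) (j + 1) :=
      integral_congr_ae (Eventually.of_forall fun x => by
        simp only [osc, map_mul, eval_X]; ring)
    rw [e1, integral_sub' (((integrable_osc hε _ _ _ _ _).const_mul _).add
      (integrable_osc hε _ _ _ _ _)) ((integrable_osc hε _ _ _ _ _).const_mul _),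
      integral_add' ((integrable_osc hε _ _ _ _ _).const_mul _) (integrable_osc hε _ _ _ _ _),
      integral_const_mul, integral_const_mul] at h
    have hII : ∀ (θ : ℝ) (p : MvPolynomial ι ℝ) (j : ℕ),
        ∫ x, osc ε ξ F θ p j x ∂gaussPi ι = II ε ξ F θ p j := fun _ _ _ => rfl
    simp only [hII] at h
    rw [show (pderiv i (pderiv i F) - X i * pderiv i F) * p + pderiv i F * pderiv i p
      = pderiv i (pderiv i F * p) + -(X i * (pderiv i F * p)) by rw [pderiv_mul]; ring,
      II_add hε, II_neg, show pderiv i F * pderiv i F * p = pderiv i F * (pderiv i F * p) by ring,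
      show pderiv i F * pderiv i (GG F F) * p = pderiv i (GG F F) * (pderiv i F * p) by ring]
    linarith
  have e1 : GG F F * p = ∑ i, pderiv i F * pderiv i F * p := by rw [GG, Finset.sum_mul]
  have e2 : LL F * p + GG F p = ∑ i, ((pderiv i (pderiv i F) - X i * pderiv i F) * p
          + pderiv i F * pderiv i p) := by
    rw [LL, GG, Finset.sum_mul, Finset.sum_add_distrib]
  have e3 : GG F (GG F F) * p = ∑ i, pderiv i F * pderiv i (GG F F) * p := by
    rw [GG, Finset.sum_mul]
  rw [e1, e2, e3, II_sum hε, II_sum hε, II_sum hε, Finset.mul_sum, Finset.mul_sum,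
    ← Finset.sum_neg_distrib, ← Finset.sum_add_distrib]
  exact Finset.sum_congr rfl fun i _ => hi i

lemma integrable_vv_pow {ε : ℝ} (hε : 0 < ε) (F : MvPolynomial ι ℝ) (n : ℕ) :
    Integrable (fun x => vv ε F x ^ n) (gaussPi ι) := by
  refine (integrable_const (1 : ℝ)).mono ((continuous_vv hε F).pow n).aestronglyMeasurable
    (Eventually.of_forall fun x => ?_)
  rw [Real.norm_of_nonneg (pow_nonneg (vv_pos hε F x).le _), norm_one]
  exact pow_le_one₀ (vv_pos hε F x).le (vv_le_one hε F x)

/-- Moments of the regularised inverse. -/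
noncomputable def VV (ε : ℝ) (F : MvPolynomial ι ℝ) (n : ℕ) : ℝ := ∫ x, vv ε F x ^ n ∂gaussPi ι

lemma VV_nonneg {ε : ℝ} (hε : 0 < ε) (F : MvPolynomial ι ℝ) (n : ℕ) : 0 ≤ VV ε F n :=
  integral_nonneg fun x => pow_nonneg (vv_pos hε F x).le _

lemma VV_anti {ε : ℝ} (hε : 0 < ε) (F : MvPolynomial ι ℝ) {n n' : ℕ} (h : n ≤ n') :
    VV ε F n' ≤ VV ε F n :=
  integral_mono (integrable_vv_pow hε F _) (integrable_vv_pow hε F _) fun x =>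
    pow_le_pow_of_le_one (vv_pos hε F x).le (vv_le_one hε F x) h

lemma II_cs {ε : ℝ} (hε : 0 < ε) (ξ : ℝ) (F : MvPolynomial ι ℝ) (θ : ℝ)
    (p : MvPolynomial ι ℝ) (j : ℕ) :
    |II ε ξ F θ p j| ≤ nrm p * √(VV ε F (2 * j)) := by
  have hpt : ∀ (t : ℝ) (x : ι → ℝ), 0 ≤ eval x (p ^ 2) * (t * t)
      + 2 * osc ε ξ F θ p j x * t + vv ε F x ^ (2 * j) := by
    intro t x
    have h1 : Real.cos (ξ * eval x F + θ) ^ 2 ≤ 1 := Real.cos_sq_le_one _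
    simp only [osc, map_pow, pow_mul']
    nlinarith [sq_nonneg (eval x p * t * Real.cos (ξ * eval x F + θ) + vv ε F x ^ j),
      mul_le_mul_of_nonneg_right h1 (sq_nonneg (eval x p * t))]
  have h : ∀ t : ℝ, 0 ≤ EE (p ^ 2) * (t * t) + (2 * II ε ξ F θ p j) * t + VV ε F (2 * j) := by
    intro t
    have h0 : 0 ≤ ∫ x, (eval x (p ^ 2) * (t * t)
      + 2 * osc ε ξ F θ p j x * t + vv ε F x ^ (2 * j)) ∂gaussPi ι := integral_nonneg (hpt t)
    have i1 := (integrable_eval_poly (p ^ 2)).mul_const (t * t)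
    have i2 := ((integrable_osc hε ξ F θ p j).const_mul 2).mul_const t
    have i12 : Integrable (fun x => eval x (p ^ 2) * (t * t) + 2 * osc ε ξ F θ p j x * t)
      (gaussPi ι) := i1.add i2
    rw [integral_add i12 (integrable_vv_pow hε F _), integral_add i1 i2,
      integral_mul_const, integral_mul_const, integral_const_mul] at h0
    exact h0
  have := discrim_le_zero h
  rw [discrim] at this
  rw [nrm, ← Real.sqrt_mul (EE_sq_nonneg p)]
  exact Real.abs_le_sqrt (by nlinarith)

end Osc

lemma osc_bound (d : ℕ) (B : ℝ) (hB : 0 ≤ B) (s : ℕ) : ∀ (j D : ℕ), ∃ c : ℝ, 0 ≤ c ∧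
    ∀ (ι : Type) [Fintype ι] (F : MvPolynomial ι ℝ), F.totalDegree ≤ d → nrm F ≤ B →
    ∀ ε : ℝ, 0 < ε → ε ≤ 1 → ∀ (θ : ℝ) (p : MvPolynomial ι ℝ), p.totalDegree ≤ D →
    |II ε (ε⁻¹ ^ 2) F θ p j| ≤ c * (nrm p * √(VV ε F (2 * (j + s)))) := by
  induction s with
  | zero =>
    intro j D
    refine ⟨1, zero_le_one, fun ι _ F hF hFB ε hε hε1 θ p hp => ?_⟩
    rw [one_mul]
    exact II_cs hε _ F θ p j
  | succ s ih =>
    intro j D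
    obtain ⟨cP, hcP, hP⟩ := prod_bound (d + D + 3 * d + 1)
    obtain ⟨cG, hcG, hG⟩ := GG_bound (d + D + 3 * d + 1)
    obtain ⟨c1, hc1, h1⟩ := ih (j + 1) D
    obtain ⟨c2, hc2, h2⟩ := ih (j + 1) (d + 1 + D)
    obtain ⟨c3, hc3, h3⟩ := ih (j + 2) (3 * d + D)
    set a1 : ℝ := cP * (d * B) + cG * B with ha1
    set a2 : ℝ := cP * (cG * (B * (cG * (B * B)))) with ha2
    have ha1' : 0 ≤ a1 := by positivity
    have ha2' : 0 ≤ a2 := by positivity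
    refine ⟨c1 + c2 * a1 + (j + 1) * (c3 * a2), by positivity,
      fun ι _ F hF hFB ε hε hε1 θ p hp => ?_⟩
    set W := √(VV ε F (2 * (j + (s + 1)))) with hW
    have W0 : 0 ≤ W := Real.sqrt_nonneg _
    have p0 := nrm_nonneg p
    have F0 := nrm_nonneg F
    have degG : (GG F F).totalDegree ≤ 2 * d := (deg_GG hF hF).trans (by omega)
    have degG2 : (GG F (GG F F)).totalDegree ≤ 3 * d := (deg_GG hF degG).trans (by omega)
    have b1 : |II ε (ε⁻¹ ^ 2) F θ p (j + 1)| ≤ c1 * (nrm p * W) := by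
      have := h1 ι F hF hFB ε hε hε1 θ p hp
      rwa [show j + 1 + s = j + (s + 1) by ring] at this
    have n2 : nrm (LL F * p + GG F p) ≤ a1 * nrm p := by
      have e1 : nrm (LL F * p) ≤ cP * ((d * B) * nrm p) := by
        refine (hP ι (LL F) p ((deg_LL hF).trans (by omega)) (hp.trans (by omega))).trans ?_
        have : nrm (LL F) ≤ d * B := (nrm_LL d F hF).trans (by gcongr)
        gcongr
      have e2 : nrm (GG F p) ≤ cG * (B * nrm p) := by
        refine (hG ι F p (hF.trans (by omega)) (hp.trans (by omega))).trans ?_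
        gcongr
      refine (nrm_add _ _).trans ((add_le_add e1 e2).trans_eq ?_)
      rw [ha1]; ring
    have b2 : |II ε (ε⁻¹ ^ 2) F (θ - Real.pi / 2) (LL F * p + GG F p) (j + 1)|
        ≤ c2 * (a1 * nrm p * W) := by
      have := h2 ι F hF hFB ε hε hε1 (θ - Real.pi / 2) (LL F * p + GG F p)
        ((totalDegree_add _ _).trans (max_le
          ((totalDegree_mul _ _).trans (add_le_add (deg_LL hF) hp))
          ((deg_GG hF hp).trans (by omega))))
      rw [show j + 1 + s = j + (s + 1) by ring] at this
      exact this.trans (by gcongr)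
    have n3 : nrm (GG F (GG F F) * p) ≤ a2 * nrm p := by
      have e1 : nrm (GG F F) ≤ cG * (B * B) :=
        (hG ι F F (hF.trans (by omega)) (hF.trans (by omega))).trans (by gcongr)
      have e2 : nrm (GG F (GG F F)) ≤ cG * (B * (cG * (B * B))) := by
        refine (hG ι F (GG F F) (hF.trans (by omega)) (degG.trans (by omega))).trans ?_
        have := nrm_nonneg (GG F F)
        gcongr
      refine (hP ι _ p (degG2.trans (by omega)) (hp.trans (by omega))).trans ?_
      calc _ ≤ cP * ((cG * (B * (cG * (B * B)))) * nrm p) := by gcongr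
        _ = _ := by rw [ha2]; ring
    have b3 : |II ε (ε⁻¹ ^ 2) F (θ - Real.pi / 2) (GG F (GG F F) * p) (j + 2)|
        ≤ c3 * (a2 * nrm p * W) := by
      have := h3 ι F hF hFB ε hε hε1 (θ - Real.pi / 2) (GG F (GG F F) * p)
        ((totalDegree_mul _ _).trans (add_le_add degG2 hp))
      refine this.trans ?_
      have hm : √(VV ε F (2 * (j + 2 + s))) ≤ W :=
        Real.sqrt_le_sqrt (VV_anti hε F (by omega))
      gcongr
    have hib := II_ibp hε (ε⁻¹ ^ 2) F θ p j
    have hsp := II_split hε (ε⁻¹ ^ 2) F θ p j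
    have hε' := hε.ne'
    have e : II ε (ε⁻¹ ^ 2) F θ p j = II ε (ε⁻¹ ^ 2) F θ p (j + 1)
        + ε * (- II ε (ε⁻¹ ^ 2) F (θ - Real.pi / 2) (LL F * p + GG F p) (j + 1))
        + (j + 1) * II ε (ε⁻¹ ^ 2) F (θ - Real.pi / 2) (GG F (GG F F) * p) (j + 2) := by
      rw [hsp]
      have : ε⁻¹ * II ε (ε⁻¹ ^ 2) F θ (GG F F * p) (j + 1)
          = ε * (ε⁻¹ ^ 2 * II ε (ε⁻¹ ^ 2) F θ (GG F F * p) (j + 1)) := by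
        field_simp
      rw [this, hib]
      field_simp
      ring
    rw [e]
    refine (abs_add_le _ _).trans ?_
    refine (add_le_add (abs_add_le _ _) le_rfl).trans ?_
    rw [abs_mul, abs_mul, abs_neg, abs_of_pos hε, abs_of_nonneg (by positivity : (0:ℝ) ≤ j + 1)]
    calc _ ≤ c1 * (nrm p * W) + 1 * (c2 * (a1 * nrm p * W)) + (j + 1) * (c3 * (a2 * nrm p * W)) := by
          gcongr
      _ = _ := by ring

/-! ### Part 5: one step of the sharp operator -/

section Step

set_option linter.unusedSectionVars false

variable {ι κ : Type} [Fintype ι] [Fintype κ]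

lemma mp_sum : MeasurePreserving (MeasurableEquiv.sumPiEquivProdPi (fun _ : ι ⊕ κ => ℝ)).symm
    ((gaussPi ι).prod (gaussPi κ)) (gaussPi (ι ⊕ κ)) :=
  measurePreserving_sumPiEquivProdPi_symm (fun _ : ι ⊕ κ => gaussianReal 0 1)

lemma mp_inl : MeasurePreserving (fun y : ι ⊕ κ → ℝ => y ∘ Sum.inl)
    (gaussPi (ι ⊕ κ)) (gaussPi ι) := by
  have h := (measurePreserving_fst (μ := gaussPi ι) (ν := gaussPi κ)).comp
    (measurePreserving_sumPiEquivProdPi (fun _ : ι ⊕ κ => gaussianReal 0 1))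
  exact h

lemma EE_rename_inl (p : MvPolynomial ι ℝ) :
    EE (rename Sum.inl p : MvPolynomial (ι ⊕ κ) ℝ) = EE p := by
  simp only [EE, eval_rename]
  rw [← (mp_inl (ι := ι) (κ := κ)).map_eq, integral_map mp_inl.measurable.aemeasurable
    (continuous_eval_poly p).aestronglyMeasurable]

/-- One application of the sharp operator along the coordinates `f a`. -/
noncomputable def stepPoly (f : κ → ι) (Q : MvPolynomial ι ℝ) : MvPolynomial (ι ⊕ κ) ℝ :=
  ∑ a, rename Sum.inl (pderiv (f a) Q) * X (Sum.inr a)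

lemma pderiv_inr_rename (a : κ) (p : MvPolynomial ι ℝ) :
    pderiv (Sum.inr a) (rename Sum.inl p : MvPolynomial (ι ⊕ κ) ℝ) = 0 := by
  classical
  refine pderiv_eq_zero_of_notMem_vars fun h => ?_
  have := vars_rename Sum.inl p h
  simp at this

lemma pderiv_inr_step (f : κ → ι) (Q : MvPolynomial ι ℝ) (a : κ) :
    pderiv (Sum.inr a) (stepPoly f Q) = rename Sum.inl (pderiv (f a) Q) := by
  classical
  simp only [stepPoly, map_sum, pderiv_mul, pderiv_inr_rename, zero_mul, zero_add, pderiv_X]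
  rw [Finset.sum_eq_single a]
  · simp
  · intro b _ hb
    simp [hb]
  · simp

lemma deg_step (f : κ → ι) (Q : MvPolynomial ι ℝ) {d : ℕ} (hQ : Q.totalDegree ≤ d) :
    (stepPoly f Q).totalDegree ≤ d + 1 :=
  totalDegree_finsetSum_le fun _ _ => (totalDegree_mul _ _).trans
    (add_le_add ((totalDegree_rename_le _ _).trans (totalDegree_pderiv_le'' _ Q hQ))
      (totalDegree_X _).le)

lemma EE_step_sq (f : κ → ι) (Q : MvPolynomial ι ℝ) :
    EE (stepPoly f Q ^ 2) = EE (∑ a, pderiv (f a) Q * pderiv (f a) Q) := by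
  have h : stepPoly f Q ^ 2 = ∑ a, X (Sum.inr a) * (rename Sum.inl (pderiv (f a) Q) * stepPoly f Q) := by
    rw [sq]
    conv_lhs => enter [1]; rw [stepPoly]
    rw [Finset.sum_mul]
    exact Finset.sum_congr rfl fun a _ => by ring
  rw [h, EE_sum, EE_sum]
  refine Finset.sum_congr rfl fun a _ => ?_
  rw [← EE_ibp, pderiv_mul, pderiv_inr_rename, zero_mul, zero_add, pderiv_inr_step, ← map_mul,
    EE_rename_inl]

/-- Conditional variance of the step polynomial. -/
noncomputable def YY (f : κ → ι) (Q : MvPolynomial ι ℝ) (x : ι → ℝ) : ℝ :=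
  ∑ a, (eval x (pderiv (f a) Q)) ^ 2

lemma YY_nonneg (f : κ → ι) (Q : MvPolynomial ι ℝ) (x : ι → ℝ) : 0 ≤ YY f Q x :=
  Finset.sum_nonneg fun _ _ => sq_nonneg _

lemma continuous_YY (f : κ → ι) (Q : MvPolynomial ι ℝ) : Continuous (YY f Q) :=
  continuous_finsetSum _ fun _ _ => (continuous_eval_poly _).pow 2

lemma YY_le {f : κ → ι} (hf : Function.Injective f) (Q : MvPolynomial ι ℝ) (x : ι → ℝ) :
    YY f Q x ≤ sqField Q x := by
  classical
  have : YY f Q x = ∑ i ∈ Finset.univ.map ⟨f, hf⟩, (eval x (pderiv i Q)) ^ 2 := by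
    rw [Finset.sum_map]; rfl
  rw [this]
  exact Finset.sum_le_univ_sum_of_nonneg fun _ => sq_nonneg _

lemma EE_step_le {f : κ → ι} (hf : Function.Injective f) (Q : MvPolynomial ι ℝ) {d : ℕ}
    (hQ : Q.totalDegree ≤ d) : EE (stepPoly f Q ^ 2) ≤ d * EE (Q ^ 2) := by
  rw [EE_step_sq]
  refine le_trans (EE_mono fun x => ?_) (spectral_upper d Q hQ).2
  rw [← sqField_eq]
  refine le_trans (le_of_eq ?_) (YY_le hf Q x)
  simp [YY, sq]

lemma integral_cos_lin (c : κ → ℝ) :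
    ∫ z, Real.cos (∑ a, c a * z a) ∂gaussPi κ = Real.exp (-(∑ a, c a ^ 2) / 2) := by
  have h1 : ∫ z, Complex.exp (((∑ a, c a * z a : ℝ) : ℂ) * Complex.I) ∂gaussPi κ
      = ((Real.exp (-(∑ a, c a ^ 2) / 2) : ℝ) : ℂ) := by
    have e : ∀ z : κ → ℝ, Complex.exp (((∑ a, c a * z a : ℝ) : ℂ) * Complex.I)
        = ∏ a, Complex.exp ((c a : ℂ) * (z a : ℂ) * Complex.I) := by
      intro z
      rw [← Complex.exp_sum]
      push_cast
      rw [Finset.sum_mul]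
    simp only [e]
    rw [gaussPi, integral_fintype_prod_eq_prod
      (f := fun a (t : ℝ) => Complex.exp ((c a : ℂ) * (t : ℂ) * Complex.I))]
    have g : ∀ a, ∫ t, Complex.exp ((c a : ℂ) * (t : ℂ) * Complex.I) ∂gaussianReal 0 1
        = Complex.exp (-(c a : ℂ) ^ 2 / 2) := by
      intro a
      rw [← charFun_apply_real, charFun_gaussianReal]
      congr 1
      push_cast
      ring
    simp only [g]
    rw [← Complex.exp_sum]
    push_cast
    congr 1
    rw [← Finset.sum_neg_distrib, Finset.sum_div]
  have hInteg : Integrable (fun z : κ → ℝ => Complex.exp (((∑ a, c a * z a : ℝ) : ℂ) * Complex.I))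
      (gaussPi κ) := by
    refine Integrable.of_bound (C := 1) (Continuous.aestronglyMeasurable (by fun_prop)) ?_
    refine Eventually.of_forall fun z => ?_
    rw [Complex.norm_exp_ofReal_mul_I]
  have h2 := congrArg Complex.re h1
  rw [Complex.ofReal_re, ← RCLike.re_eq_complex_re, ← integral_re hInteg] at h2
  rw [← h2]
  refine integral_congr_ae (Eventually.of_forall fun z => ?_)
  simp only [RCLike.re_eq_complex_re, Complex.exp_ofReal_mul_I_re]

lemma integral_cos_step (f : κ → ι) (Q : MvPolynomial ι ℝ) (ξ : ℝ) :
    ∫ y, Real.cos (ξ * eval y (stepPoly f Q)) ∂gaussPi (ι ⊕ κ)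
      = ∫ x, Real.exp (-(ξ ^ 2 * YY f Q x) / 2) ∂gaussPi ι := by
  have hc : Continuous (fun y : ι ⊕ κ → ℝ => Real.cos (ξ * eval y (stepPoly f Q))) := by
    have := continuous_eval_poly (stepPoly f Q)
    fun_prop
  rw [← (mp_sum (ι := ι) (κ := κ)).integral_comp' ]
  rw [integral_prod]
  · refine integral_congr_ae (Eventually.of_forall fun x => ?_)
    simp only
    have := integral_cos_lin (fun a => ξ * eval x (pderiv (f a) Q))
    simp only [mul_pow, ← Finset.mul_sum] at this
    rw [YY, ← this]
    refine integral_congr_ae (Eventually.of_forall fun z => ?_)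
    simp only [stepPoly, map_sum, map_mul, eval_X, eval_rename]
    rw [Finset.mul_sum]
    congr 1
    refine Finset.sum_congr rfl fun a _ => ?_
    rw [← mul_assoc]
    rfl
  · refine Integrable.of_bound (C := 1) ?_ ?_
    · exact (hc.measurable.comp (MeasurableEquiv.measurable _)).aestronglyMeasurable
    · refine Eventually.of_forall fun z => ?_
      exact Real.abs_cos_le_one _

lemma neg_pow_le (Y : ℝ) (hY : 0 ≤ Y) (q : ℕ) :
    (ENNReal.ofReal Y ^ q)⁻¹ ≤ 1 + ∑' n : ℕ, ENNReal.ofReal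
      (16 ^ ((n + 1) * q) * (Real.exp (1 / 2) * Real.exp (-(16 ^ n * Y) / 2))) := by
  have hone : ∀ n : ℕ, 16 ^ n * Y ≤ 1 →
      1 ≤ Real.exp (1 / 2) * Real.exp (-(16 ^ n * Y) / 2) := by
    intro n hn
    rw [← Real.exp_add]
    exact Real.one_le_exp (by linarith)
  rcases hY.eq_or_lt with h0 | h0
  · subst h0
    have : ∑' n : ℕ, ENNReal.ofReal
      (16 ^ ((n + 1) * q) * (Real.exp (1 / 2) * Real.exp (-(16 ^ n * 0) / 2))) = ⊤ := by
      rw [← top_le_iff, ← ENNReal.tsum_const_eq_top_of_ne_zero (α := ℕ) (c := 1) one_ne_zero]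
      refine ENNReal.tsum_le_tsum fun n => ?_
      rw [ENNReal.one_le_ofReal]
      exact one_le_mul_of_one_le_of_one_le (one_le_pow₀ (by norm_num)) (hone n (by simp))
    rw [this]; simp
  · rcases le_or_gt 1 Y with h1 | h1
    · refine le_trans ?_ le_self_add
      rw [ENNReal.inv_le_one]
      exact one_le_pow₀ (by rwa [ENNReal.one_le_ofReal])
    · obtain ⟨n, hn1, hn2⟩ := exists_nat_pow_near_of_lt_one h0 h1.le (by norm_num : (0:ℝ) < 1 / 16)
        (by norm_num)
      refine le_trans ?_ le_add_self
      refine le_trans ?_ (ENNReal.le_tsum n)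
      rw [← ENNReal.ofReal_pow hY, ← ENNReal.ofReal_inv_of_pos (by positivity)]
      refine ENNReal.ofReal_le_ofReal ?_
      have e1 : 16 ^ n * Y ≤ 1 := by
        rw [one_div, inv_pow] at hn2
        calc 16 ^ n * Y ≤ 16 ^ n * (16 ^ n)⁻¹ := by gcongr
          _ = 1 := mul_inv_cancel₀ (by positivity)
      refine le_trans ?_ (le_mul_of_one_le_right (by positivity) (hone n e1))
      rw [pow_mul, ← inv_pow]
      gcongr
      rw [one_div, inv_pow] at hn1
      exact inv_le_of_inv_le₀ (by positivity) hn1.le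

lemma markov_lower (S : MvPolynomial ι ℝ) {A : ℝ} (hA : 0 < A) (h : EE (GG S S) ≤ A) (n : ℕ) :
    ENNReal.ofReal (((2 * A) ^ n)⁻¹ / 2)
      ≤ ∫⁻ x, (ENNReal.ofReal (sqField S x) ^ n)⁻¹ ∂gaussPi ι := by
  have hcont : Continuous (sqField S) := by
    have : sqField S = fun x => eval x (GG S S) := funext (sqField_eq S)
    rw [this]; exact continuous_eval_poly _
  have hI : ∫⁻ x, ENNReal.ofReal (sqField S x) ∂gaussPi ι ≤ ENNReal.ofReal A := by
    simp only [sqField_eq]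
    rw [← ofReal_integral_eq_lintegral_ofReal (integrable_eval_poly _)
      (Eventually.of_forall fun x => eval_GG_self_nonneg S x)]
    exact ENNReal.ofReal_le_ofReal h
  set T : Set (ι → ℝ) := {x | ENNReal.ofReal (2 * A) ≤ ENNReal.ofReal (sqField S x)} with hT
  have hTm : MeasurableSet T := measurableSet_le measurable_const
    (ENNReal.measurable_ofReal.comp hcont.measurable)
  have hm : gaussPi ι T ≤ ENNReal.ofReal (1 / 2) := by
    have h1 := mul_meas_ge_le_lintegral (μ := gaussPi ι)
      (ENNReal.measurable_ofReal.comp hcont.measurable) (ENNReal.ofReal (2 * A))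
    have h2 := h1.trans hI
    rw [mul_comm, ← ENNReal.le_div_iff_mul_le (Or.inl (by simpa using hA)) (Or.inl ENNReal.ofReal_ne_top),
      ← ENNReal.ofReal_div_of_pos (by positivity)] at h2
    refine h2.trans_eq ?_
    congr 1
    field_simp
  have hc : ENNReal.ofReal (1 / 2) ≤ gaussPi ι Tᶜ := by
    rw [prob_compl_eq_one_sub hTm]
    refine le_trans (le_of_eq ?_) (tsub_le_tsub_left hm 1)
    rw [← ENNReal.ofReal_one, ← ENNReal.ofReal_sub _ (by norm_num)]
    norm_num
  calc ENNReal.ofReal (((2 * A) ^ n)⁻¹ / 2)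
      = ENNReal.ofReal (((2 * A) ^ n)⁻¹) * ENNReal.ofReal (1 / 2) := by
        rw [← ENNReal.ofReal_mul (by positivity)]; congr 1; ring
    _ ≤ ENNReal.ofReal (((2 * A) ^ n)⁻¹) * gaussPi ι Tᶜ := by gcongr
    _ = ∫⁻ x in Tᶜ, ENNReal.ofReal (((2 * A) ^ n)⁻¹) ∂gaussPi ι := by
        rw [setLIntegral_const]
    _ ≤ ∫⁻ x in Tᶜ, (ENNReal.ofReal (sqField S x) ^ n)⁻¹ ∂gaussPi ι := by
        refine setLIntegral_mono' hTm.compl fun x hx => ?_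
        rw [ENNReal.ofReal_inv_of_pos (by positivity), ENNReal.ofReal_pow (by positivity)]
        have : ENNReal.ofReal (sqField S x) ≤ ENNReal.ofReal (2 * A) := by
          have hx' : ¬ (ENNReal.ofReal (2 * A) ≤ ENNReal.ofReal (sqField S x)) := hx
          exact (not_le.mp hx').le
        gcongr
    _ ≤ _ := setLIntegral_le_lintegral _ _

lemma VV_le_neg {ε : ℝ} (hε : 0 < ε) (S : MvPolynomial ι ℝ) (n : ℕ) :
    ENNReal.ofReal (VV ε S n) ≤ ENNReal.ofReal (ε ^ n) *
      ∫⁻ x, (ENNReal.ofReal (sqField S x) ^ n)⁻¹ ∂gaussPi ι := by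
  rw [VV, ofReal_integral_eq_lintegral_ofReal (integrable_vv_pow hε S n)
    (Eventually.of_forall fun x => pow_nonneg (vv_pos hε S x).le _),
    ← lintegral_const_mul' _ _ ENNReal.ofReal_ne_top]
  refine lintegral_mono fun x => ?_
  simp only [sqField_eq]
  rcases Nat.eq_zero_or_pos n with rfl | hn
  · simp
  rcases (eval_GG_self_nonneg S x).eq_or_lt with h | h
  · rw [← h]
    have : ENNReal.ofReal (ε ^ n) ≠ 0 := by
      simpa using pow_pos hε n
    simp [hn.ne', ENNReal.mul_top this]
  · rw [← ENNReal.ofReal_pow h.le, ← ENNReal.ofReal_inv_of_pos (by positivity),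
      ← ENNReal.ofReal_mul (by positivity)]
    refine ENNReal.ofReal_le_ofReal ?_
    rw [vv, div_pow, div_eq_mul_inv]
    gcongr
    linarith

end Step

lemma step_bound (d : ℕ) (B : ℝ) (hB : 0 ≤ B) (q : ℕ) : ∃ (q' : ℕ) (C : ℝ), 0 < C ∧
    ∀ (ι κ : Type) [Fintype ι] [Fintype κ] (f : κ → ι), Function.Injective f →
    ∀ Q : MvPolynomial ι ℝ, Q.totalDegree ≤ d → EE (Q ^ 2) ≤ B →
    ∫⁻ x, (ENNReal.ofReal (sqField Q x) ^ q)⁻¹ ∂gaussPi ι ≤ ENNReal.ofReal C *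
      ∫⁻ y, (ENNReal.ofReal (sqField (stepPoly f Q) y) ^ q')⁻¹ ∂gaussPi (ι ⊕ κ) := by
  set s : ℕ := 4 * q + 1 with hs
  obtain ⟨c, hc, hosc⟩ := osc_bound (d + 1) (√(d * B)) (Real.sqrt_nonneg _) s 0 0
  set A : ℝ := (d + 1) * (d * B) + 1 with hA
  have hApos : 0 < A := by positivity
  set c0 : ℝ := ((2 * A) ^ (2 * s))⁻¹ / 2 with hc0
  have hc0pos : 0 < c0 := by positivity
  refine ⟨2 * s, c0⁻¹ + 16 ^ q * Real.exp (1 / 2) * c * (√c0)⁻¹ * 2, by positivity, ?_⟩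
  intro ι κ _ _ f hf Q hQ hQB
  set S := stepPoly f Q with hS
  set M := ∫⁻ y, (ENNReal.ofReal (sqField S y) ^ (2 * s))⁻¹ ∂gaussPi (ι ⊕ κ) with hM
  have hdS : S.totalDegree ≤ d + 1 := deg_step f Q hQ
  have hES : EE (S ^ 2) ≤ d * B := (EE_step_le hf Q hQ).trans (by gcongr)
  have hnS : nrm S ≤ √(d * B) := Real.sqrt_le_sqrt hES
  have hGS : EE (GG S S) ≤ A := by
    have h1 := (spectral_upper (d + 1) S hdS).2
    push_cast at h1
    have h2 : ((d : ℝ) + 1) * EE (S ^ 2) ≤ (d + 1) * (d * B) := by gcongr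
    linarith
  have hMlow : ENNReal.ofReal c0 ≤ M := markov_lower S hApos hGS (2 * s)
  by_cases hMtop : M = ⊤
  · rw [hMtop, ENNReal.mul_top]
    · exact le_top
    · have : 0 < c0⁻¹ + 16 ^ q * Real.exp (1 / 2) * c * (√c0)⁻¹ * 2 := by positivity
      simpa using this
  set r := M.toReal with hr
  have hMr : M = ENNReal.ofReal r := (ENNReal.ofReal_toReal hMtop).symm
  have hr0 : 0 ≤ r := ENNReal.toReal_nonneg
  have hc0r : c0 ≤ r := by
    rw [hMr] at hMlow
    exact (ENNReal.ofReal_le_ofReal_iff hr0).mp hMlow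
  have hsr : √r ≤ (√c0)⁻¹ * r := by
    have h1 : √c0 ≤ √r := Real.sqrt_le_sqrt hc0r
    have h2 : 0 < √c0 := Real.sqrt_pos.mpr hc0pos
    have h3 : √c0 * √r ≤ r := by
      calc √c0 * √r ≤ √r * √r := by gcongr
        _ = r := Real.mul_self_sqrt hr0
    rw [inv_mul_eq_div, le_div_iff₀ h2]
    linarith
  have key : ∀ n : ℕ, ∫ x, Real.exp (-(16 ^ n * YY f Q x) / 2) ∂gaussPi ι
      ≤ c * (((2 : ℝ)⁻¹ ^ n) ^ s * ((√c0)⁻¹ * r)) := by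
    intro n
    set ε : ℝ := (2 : ℝ)⁻¹ ^ n with hε
    have hεpos : 0 < ε := by positivity
    have hε1 : ε ≤ 1 := pow_le_one₀ (by norm_num) (by norm_num)
    have h1 := hosc (ι ⊕ κ) S hdS hnS ε hεpos hε1 0 1 (by simp)
    have h2 : II ε (ε⁻¹ ^ 2) S 0 1 0 = ∫ x, Real.exp (-(16 ^ n * YY f Q x) / 2) ∂gaussPi ι := by
      have h3 := integral_cos_step f Q (ε⁻¹ ^ 2)
      have h4 : (ε⁻¹ ^ 2) ^ 2 = (16 : ℝ) ^ n := by
        have h0 : ε⁻¹ = 2 ^ n := by rw [hε, inv_pow, inv_inv]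
        rw [h0, ← pow_mul, ← pow_mul, show n * (2 * 2) = 4 * n by ring, pow_mul]
        norm_num
      rw [h4] at h3
      rw [← h3]
      simp [II, osc, hS]
    have h5 : nrm (1 : MvPolynomial (ι ⊕ κ) ℝ) = 1 := by
      have := EE_C (ι := ι ⊕ κ) 1
      rw [map_one] at this
      simp [nrm, this]
    have h6 : √(VV ε S (2 * (0 + s))) ≤ ε ^ s * √r := by
      have h7 := VV_le_neg hεpos S (2 * s)
      rw [← hM, hMr, ← ENNReal.ofReal_mul (by positivity),
        ENNReal.ofReal_le_ofReal_iff (by positivity)] at h7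
      rw [zero_add]
      refine (Real.sqrt_le_sqrt h7).trans_eq ?_
      rw [Real.sqrt_mul (by positivity), mul_comm 2 s, pow_mul, Real.sqrt_sq (by positivity)]
    rw [h2, h5, one_mul] at h1
    refine (le_abs_self _).trans (h1.trans ?_)
    gcongr
    exact h6.trans (by gcongr)
  have hcY := continuous_YY f Q
  have hterm : ∀ n : ℕ, ∫⁻ x, ENNReal.ofReal
      (16 ^ ((n + 1) * q) * (Real.exp (1 / 2) * Real.exp (-(16 ^ n * YY f Q x) / 2))) ∂gaussPi ι
      ≤ ENNReal.ofReal (16 ^ q * Real.exp (1 / 2) * c * (√c0)⁻¹ * r) * ((2 : ℝ≥0∞)⁻¹) ^ n := by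
    intro n
    have hInteg : Integrable (fun x => Real.exp (-(16 ^ n * YY f Q x) / 2)) (gaussPi ι) := by
      refine Integrable.of_bound (C := 1) (Continuous.aestronglyMeasurable (by fun_prop)) ?_
      refine Eventually.of_forall fun x => ?_
      rw [Real.norm_of_nonneg (Real.exp_pos _).le, Real.exp_le_one_iff]
      have : 0 ≤ 16 ^ n * YY f Q x := mul_nonneg (by positivity) (YY_nonneg f Q x)
      linarith
    rw [← ofReal_integral_eq_lintegral_ofReal ((hInteg.const_mul _).const_mul _)
      (Eventually.of_forall fun x => by positivity), integral_const_mul, integral_const_mul]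
    have e : ((2 : ℝ≥0∞)⁻¹) ^ n = ENNReal.ofReal ((2 : ℝ)⁻¹ ^ n) := by
      rw [ENNReal.ofReal_pow (by norm_num), ENNReal.ofReal_inv_of_pos (by norm_num)]
      norm_num
    rw [e, ← ENNReal.ofReal_mul (by positivity)]
    refine ENNReal.ofReal_le_ofReal ?_
    have hk := key n
    calc _ ≤ 16 ^ ((n + 1) * q) * (Real.exp (1 / 2) * (c * (((2 : ℝ)⁻¹ ^ n) ^ s * ((√c0)⁻¹ * r)))) := by
          gcongr
      _ = 16 ^ q * Real.exp (1 / 2) * c * (√c0)⁻¹ * r * ((16 ^ n) ^ q * ((2 : ℝ)⁻¹ ^ n) ^ s) := by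
          rw [add_mul, pow_add, pow_mul, one_mul]; ring
      _ = _ := by
          congr 1
          rw [hs, pow_succ, pow_mul, ← mul_assoc, ← mul_pow]
          rw [← pow_mul, mul_comm n 4, pow_mul, ← mul_pow]
          norm_num
  have hfin : ∫⁻ x, (ENNReal.ofReal (YY f Q x) ^ q)⁻¹ ∂gaussPi ι
      ≤ 1 + ENNReal.ofReal (16 ^ q * Real.exp (1 / 2) * c * (√c0)⁻¹ * r) * 2 := by
    refine (lintegral_mono fun x => neg_pow_le (YY f Q x) (YY_nonneg f Q x) q).trans ?_
    rw [lintegral_add_left measurable_const, lintegral_tsum]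
    · simp only [lintegral_const, measure_univ, mul_one]
      gcongr
      refine (ENNReal.tsum_le_tsum hterm).trans ?_
      rw [ENNReal.tsum_mul_left, ENNReal.tsum_geometric, ENNReal.one_sub_inv_two, inv_inv]
    · intro n
      exact (ENNReal.measurable_ofReal.comp
        (Continuous.measurable (by fun_prop))).aemeasurable
  calc _ ≤ ∫⁻ x, (ENNReal.ofReal (YY f Q x) ^ q)⁻¹ ∂gaussPi ι := by
        refine lintegral_mono fun x => ?_
        have := YY_le hf Q x
        gcongr
    _ ≤ _ := hfin
    _ ≤ _ := by
        have e2 : (2 : ℝ≥0∞) = ENNReal.ofReal 2 := by norm_num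
        rw [hMr, ← ENNReal.ofReal_mul (by positivity), e2, ← ENNReal.ofReal_mul (by positivity),
          ← ENNReal.ofReal_one, ← ENNReal.ofReal_add (by norm_num) (by positivity)]
        refine ENNReal.ofReal_le_ofReal ?_
        have : 1 ≤ c0⁻¹ * r := by
          rw [inv_mul_eq_div, le_div_iff₀ hc0pos]; linarith
        linarith

/-! ### Part 6: iteration -/

section Iterate

set_option linter.unusedSectionVars false

variable {α β : Type} [Fintype α] [Fintype β]

lemma mp_equiv (e : α ≃ β) : MeasurePreserving (fun y : β → ℝ => y ∘ e) (gaussPi β) (gaussPi α) := by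
  have h := (measurePreserving_piCongrLeft (fun _ : β => gaussianReal 0 1) e).symm
  exact h

lemma continuous_sqField (P : MvPolynomial α ℝ) : Continuous (sqField P) :=
  continuous_finsetSum _ fun _ _ => (continuous_eval_poly _).pow 2

lemma sqField_rename_equiv (e : α ≃ β) (P : MvPolynomial α ℝ) (y : β → ℝ) :
    sqField (rename e P) y = sqField P (y ∘ e) := by
  rw [sqField, sqField, ← Equiv.sum_comp e]
  refine Finset.sum_congr rfl fun i _ => ?_
  rw [pderiv_rename e.injective, eval_rename]

lemma sqField_rename_inl (P : MvPolynomial α ℝ) (y : α ⊕ β → ℝ) :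
    sqField (rename Sum.inl P) y = sqField P (y ∘ Sum.inl) := by
  rw [sqField, sqField, Fintype.sum_sum_type]
  simp only [pderiv_inr_rename, map_zero]
  rw [Finset.sum_eq_zero (s := (Finset.univ : Finset β)) (by simp), add_zero]
  refine Finset.sum_congr rfl fun i _ => ?_
  rw [pderiv_rename Sum.inl_injective, eval_rename]

lemma measurable_negpow (P : MvPolynomial α ℝ) (q : ℕ) :
    Measurable (fun x => (ENNReal.ofReal (sqField P x) ^ q)⁻¹) :=
  ((ENNReal.measurable_ofReal.comp (continuous_sqField P).measurable).pow_const q).inv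

lemma neg_rename_equiv (e : α ≃ β) (P : MvPolynomial α ℝ) (q : ℕ) :
    ∫⁻ y, (ENNReal.ofReal (sqField (rename e P) y) ^ q)⁻¹ ∂gaussPi β
      = ∫⁻ x, (ENNReal.ofReal (sqField P x) ^ q)⁻¹ ∂gaussPi α := by
  simp only [sqField_rename_equiv]
  exact (mp_equiv e).lintegral_comp (measurable_negpow P q)

lemma neg_rename_inl (P : MvPolynomial α ℝ) (q : ℕ) :
    ∫⁻ y, (ENNReal.ofReal (sqField (rename Sum.inl P) y) ^ q)⁻¹ ∂gaussPi (α ⊕ β)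
      = ∫⁻ x, (ENNReal.ofReal (sqField P x) ^ q)⁻¹ ∂gaussPi α := by
  simp only [sqField_rename_inl]
  exact (mp_inl (ι := α) (κ := β)).lintegral_comp (measurable_negpow P q)

lemma EE_rename_equiv (e : α ≃ β) (p : MvPolynomial α ℝ) : EE (rename e p) = EE p := by
  simp only [EE, eval_rename]
  rw [← (mp_equiv e).map_eq, integral_map (mp_equiv e).measurable.aemeasurable
    (continuous_eval_poly p).aestronglyMeasurable]

lemma pderiv_inl_rename (a : α) (p : MvPolynomial β ℝ) :
    pderiv (Sum.inl a) (rename Sum.inr p : MvPolynomial (α ⊕ β) ℝ) = 0 := by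
  classical
  refine pderiv_eq_zero_of_notMem_vars fun h => ?_
  have := vars_rename Sum.inr p h
  simp at this

end Iterate

lemma sharp_zero {K : ℕ} (P : MvPolynomial (Fin K) ℝ) : sharpPoly 0 P = rename Sum.inl P := by
  simp [sharpPoly, pderivMulti]

/-- Reindexing of the Gaussian coordinates after one more sharp. -/
def sharpEquiv (K k : ℕ) : (Fin K ⊕ Fin k × Fin K) ⊕ Fin K ≃ Fin K ⊕ Fin (k + 1) × Fin K where
  toFun := Sum.elim (Sum.elim Sum.inl fun z => Sum.inr (z.1.succ, z.2)) fun a => Sum.inr (0, a)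
  invFun := Sum.elim (fun a => Sum.inl (Sum.inl a)) fun z =>
    Fin.cases (motive := fun _ => (Fin K ⊕ Fin k × Fin K) ⊕ Fin K) (Sum.inr z.2)
      (fun j => Sum.inl (Sum.inr (j, z.2))) z.1
  left_inv := by
    rintro ((a | ⟨j, a⟩) | a) <;> simp
  right_inv := by
    rintro (a | ⟨j, a⟩)
    · simp
    · refine Fin.cases ?_ (fun j => ?_) j <;> simp

lemma pderivMulti_cons {K k : ℕ} (a : Fin K) (i : Fin k → Fin K) (P : MvPolynomial (Fin K) ℝ) :
    pderivMulti (Fin.cons a i : Fin (k + 1) → Fin K) P = pderiv a (pderivMulti i P) := by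
  simp [pderivMulti]

lemma sharp_succ {K : ℕ} (k : ℕ) (P : MvPolynomial (Fin K) ℝ) :
    sharpPoly (k + 1) P = rename (sharpEquiv K k) (stepPoly Sum.inl (sharpPoly k P)) := by
  have hd : ∀ a : Fin K, pderiv (Sum.inl a) (sharpPoly k P)
      = ∑ i : Fin k → Fin K, rename Sum.inl (pderiv a (pderivMulti i P))
        * ∏ j, X (Sum.inr (j, i j)) := by
    intro a
    rw [sharpPoly, map_sum]
    refine Finset.sum_congr rfl fun i _ => ?_
    have : (∏ j, X (Sum.inr (j, i j)) : MvPolynomial (Fin K ⊕ Fin k × Fin K) ℝ)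
        = rename Sum.inr (∏ j, X (j, i j)) := by simp
    rw [this, pderiv_mul, pderiv_inl_rename, pderiv_rename Sum.inl_injective]
    simp
  rw [stepPoly, map_sum, sharpPoly,
    ← Equiv.sum_comp (Fin.consEquiv (fun _ : Fin (k + 1) => Fin K)), Fintype.sum_prod_type]
  refine Finset.sum_congr rfl fun a _ => ?_
  rw [hd, map_sum, Finset.sum_mul, map_sum]
  refine Finset.sum_congr rfl fun i _ => ?_
  have hc : Fin.consEquiv (fun _ : Fin (k + 1) => Fin K) (a, i) = Fin.cons a i := rfl
  rw [hc, pderivMulti_cons, Fin.prod_univ_succ]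
  simp only [map_mul, map_prod, rename_rename, rename_X, Fin.cons_zero, Fin.cons_succ]
  have h1 : (sharpEquiv K k ∘ Sum.inl ∘ Sum.inl : Fin K → Fin K ⊕ Fin (k + 1) × Fin K)
      = Sum.inl := by ext x; rfl
  rw [h1]
  have h2 : ∀ j a, sharpEquiv K k (Sum.inl (Sum.inr (j, a))) = Sum.inr (j.succ, a) :=
    fun _ _ => rfl
  have h3 : ∀ a, sharpEquiv K k (Sum.inr a) = Sum.inr (0, a) := fun _ => rfl
  simp only [h2, h3]
  ring

lemma sharp_bounds (m k : ℕ) : ∃ B : ℝ, 0 ≤ B ∧ ∀ (K : ℕ) (P : MvPolynomial (Fin K) ℝ),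
    P.totalDegree ≤ m → EE (P ^ 2) = 1 →
    (sharpPoly k P).totalDegree ≤ m + k ∧ EE (sharpPoly k P ^ 2) ≤ B := by
  induction k with
  | zero =>
    refine ⟨1, zero_le_one, fun K P hP h1 => ?_⟩
    rw [sharp_zero, ← map_pow, EE_rename_inl]
    exact ⟨(totalDegree_rename_le _ _).trans hP, h1.le⟩
  | succ k ih =>
    obtain ⟨B, hB, h⟩ := ih
    refine ⟨((m + k : ℕ) : ℝ) * B, by positivity, fun K P hP h1 => ?_⟩
    obtain ⟨hd, hE⟩ := h K P hP h1
    rw [sharp_succ, ← map_pow, EE_rename_equiv]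
    refine ⟨(totalDegree_rename_le _ _).trans (deg_step _ _ hd), ?_⟩
    refine (EE_step_le Sum.inl_injective _ hd).trans ?_
    gcongr

lemma sharp_main (m q k : ℕ) :
    ∃ (q' : ℕ) (C : ℝ), 0 < C ∧ ∀ (K : ℕ) (P : MvPolynomial (Fin K) ℝ),
      P.totalDegree ≤ m → EE (P ^ 2) = 1 →
      ∫⁻ x, (ENNReal.ofReal (sqField P x) ^ q)⁻¹ ∂gaussPi (Fin K)
        ≤ ENNReal.ofReal C *
          ∫⁻ y, (ENNReal.ofReal (sqField (sharpPoly k P) y) ^ q')⁻¹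
            ∂gaussPi (Fin K ⊕ Fin k × Fin K) := by
  induction k with
  | zero =>
    refine ⟨q, 1, one_pos, fun K P _ _ => ?_⟩
    rw [sharp_zero, neg_rename_inl]
    simp
  | succ k ih =>
    obtain ⟨q1, C1, hC1, h1⟩ := ih
    obtain ⟨B, hB, hb⟩ := sharp_bounds m k
    obtain ⟨q2, C2, hC2, h2⟩ := step_bound (m + k) B hB q1
    refine ⟨q2, C1 * C2, by positivity, fun K P hP hP1 => ?_⟩
    obtain ⟨hd, hE⟩ := hb K P hP hP1
    refine (h1 K P hP hP1).trans ?_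
    rw [sharp_succ, neg_rename_equiv, ENNReal.ofReal_mul hC1.le, mul_assoc]
    gcongr
    exact h2 _ _ Sum.inl Sum.inl_injective _ hd hE

/-- Negative moments of the carré du champ of `F` are controlled by negative
moments of the carré du champ of the iterated sharp `♯^k[F]`. -/
theorem negative_moments_via_sharp (m q k : ℕ) (hk1 : 1 ≤ k) (hkm : k ≤ m) :
    ∃ (q' : ℕ) (C : ℝ), 0 < C ∧ ∀ (K : ℕ) (P : MvPolynomial (Fin K) ℝ),
      P.totalDegree ≤ m →
      (∫ x, (eval x P) ^ 2 ∂gaussPi (Fin K)) = 1 →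
      ∫⁻ x, (ENNReal.ofReal (sqField P x) ^ q)⁻¹ ∂gaussPi (Fin K)
        ≤ ENNReal.ofReal C *
          ∫⁻ y, (ENNReal.ofReal (sqField (sharpPoly k P) y) ^ q')⁻¹
            ∂gaussPi (Fin K ⊕ Fin k × Fin K) := by
  obtain ⟨q', C, hC, h⟩ := sharp_main m q k
  refine ⟨q', C, hC, fun K P hP h1 => h K P hP ?_⟩
  simpa [EE] using h1
end
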